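/- arXiv:2207.02525 — 3 statements merged into one kernel-verified Lean document; each statement's English description precedes it below -/
import Mathlib

section
/- Let μ be a non-zero finite positive Borel measure on 𝕋, n ∈ ℕ, and f holomorphic on 𝔻 with D_{μ,n}(f) < ∞. Then for every j = 0, 1, …, n, the integral ∫_𝔻 |f^{(j)}(z)|² P_μ(z)(1-|z|²)^{n-1} dA(z) is finite. -/
open MeasureTheory Metric Complex
open scoped ENNReal NNReal

/-- The normalized Lebesgue area measure on ℂ (so the unit disc has mass 1). -/
noncomputable def nA : Measure ℂ := (ENNReal.ofReal Real.pi)⁻¹ • volume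

/-- The Poisson integral of the measure `μ`. -/
noncomputable def Pmu (μ : Measure ℂ) (z : ℂ) : ℝ≥0∞ :=
  ∫⁻ ζ, ENNReal.ofReal ((1 - ‖z‖^2) / ‖z - ζ‖^2) ∂μ

/-- The weighted Dirichlet-type integral of order `n`. -/
noncomputable def Dmu (n : ℕ) (μ : Measure ℂ) (f : ℂ → ℂ) : ℝ≥0∞ :=
  ENNReal.ofReal (1 / ((n.factorial : ℝ) * ((n-1).factorial : ℝ))) *
    ∫⁻ z in ball (0:ℂ) 1, (‖iteratedDeriv n f z‖₊ : ℝ≥0∞) ^ 2 * Pmu μ z *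
      ENNReal.ofReal ((1 - ‖z‖^2)^(n-1)) ∂nA

/-!
The idea is to lower the order of the derivative one at a time: if `g` is holomorphic on the disc
and `∫ |g'|² P_μ (1-|z|²)^(n-1) < ∞`, then the same integral with `g` in place of `g'` is finite.
By Tonelli the weight is a `μ`-average of the weights `(1-|z|²)^n / |z-ζ|²` with `|ζ| = 1`, so it
is enough to bound, uniformly in `ζ`, the integral of `|g|²` against such a weight by a multiple of
`|g(0)|²` plus a multiple of the integral of `|g'|²` (`localDirichlet_le`).

For fixed `ζ` put `L = g / (z-ζ)` and `M = g' / (z-ζ)`. Both are holomorphic on the disc, and the two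
integrals become the norms of `L` and `M` in the Bergman space with the radial weight `(1-|z|²)^n`,
hence are weighted `ℓ²` sums of Taylor coefficients (`bergman`). The identity `((z-ζ) L)' = (z-ζ) M`
reads `(k+1) (l_k - ζ l_{k+1}) = m_{k-1} - ζ m_k`. With `a_k = ζ^k l_k` and `b_k = ζ^{k+1} m_k` it
becomes `(k+1) (a_{k+1} - a_k) = b_k - b_{k-1}`, and what remains is a discrete Hardy inequality
(`discrete_hardy`). The only property of the Bergman weights `β_k` that it uses is that
`(k+1) (k+2) β_k` is decreasing, which holds exactly because `n ≥ 1`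
(`antitone_weighted_radialMoment`).
-/

/-! ### Parseval's identity on circles -/

theorem integral_exp_circle (j k : ℕ) :
    ∫ θ in (-Real.pi)..Real.pi, Complex.exp (((k:ℂ) - j) * I * θ) =
      if j = k then (2 * Real.pi : ℂ) else 0 := by
  split_ifs with h
  · subst h
    simp only [sub_self, zero_mul, Complex.exp_zero, intervalIntegral.integral_const]
    rw [Complex.real_smul]; push_cast; ring
  · have hc : ((k:ℂ) - j) * I ≠ 0 := by
      refine mul_ne_zero (sub_ne_zero.2 ?_) I_ne_zero
      exact fun e => h (by exact_mod_cast e.symm)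
    rw [integral_exp_mul_complex hc, div_eq_zero_iff]
    left
    rw [sub_eq_zero, Complex.exp_eq_exp_iff_exists_int]
    exact ⟨(k:ℤ) - j, by push_cast; ring⟩

/-- Parseval's identity for an absolutely convergent series `∑ aₖ e^{ikθ}`: the square is expanded
into a double series, integrated term by term, and only the diagonal survives. -/
theorem parseval_circle (a : ℕ → ℂ) (ha : Summable fun k => ‖a k‖) :
    ∫ θ in (-Real.pi)..Real.pi, ‖∑' k, a k * Complex.exp (k * I * θ)‖ ^ 2 =
      2 * Real.pi * ∑' k, ‖a k‖ ^ 2 := by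
  have hnorm : ∀ (k : ℕ) (θ : ℝ), ‖Complex.exp (k * I * θ)‖ = 1 := fun k θ => by
    rw [show (k:ℂ) * I * θ = ((k * θ : ℝ) : ℂ) * I by push_cast; ring]
    exact Complex.norm_exp_ofReal_mul_I _
  have hconj : ∀ (k : ℕ) (θ : ℝ),
      (starRingEnd ℂ) (Complex.exp (k * I * θ)) = Complex.exp (-(k * I * θ)) := fun k θ => by
    rw [← Complex.exp_conj]; simp
  let F : ℕ × ℕ → ℝ → ℂ := fun p θ =>
    ((starRingEnd ℂ) (a p.1) * a p.2) * Complex.exp (((p.2:ℂ) - p.1) * I * θ)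
  have hFn : ∀ p θ, ‖F p θ‖ = ‖a p.1‖ * ‖a p.2‖ := fun p θ => by
    simp only [F, norm_mul, RCLike.norm_conj]
    rw [show ((p.2:ℂ) - p.1) * I * θ = (((p.2 - p.1) * θ : ℝ) : ℂ) * I by push_cast; ring,
      Complex.norm_exp_ofReal_mul_I, mul_one]
  have hpt : ∀ θ : ℝ, ((‖∑' k, a k * Complex.exp (k * I * θ)‖ ^ 2 : ℝ) : ℂ) = ∑' p, F p θ := by
    intro θ
    have hs : Summable fun k => ‖a k * Complex.exp (k * I * θ)‖ := by
      simpa [hnorm] using ha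
    have hs' : Summable fun k => ‖(starRingEnd ℂ) (a k * Complex.exp (k * I * θ))‖ := by
      simpa only [RCLike.norm_conj] using hs
    have := tsum_mul_tsum_of_summable_norm hs' hs
    rw [← Complex.conj_tsum, Complex.conj_mul'] at this
    push_cast
    rw [this]
    refine tsum_congr fun p => ?_
    simp only [F, map_mul, hconj]
    rw [show ((p.2:ℂ) - p.1) * I * θ = -(p.1 * I * θ) + p.2 * I * θ by ring, Complex.exp_add]
    ring
  have hpi : -Real.pi ≤ Real.pi := by linarith [Real.pi_pos]
  have hsum : Summable fun p : ℕ × ℕ => ‖a p.1‖ * ‖a p.2‖ :=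
    ha.mul_of_nonneg ha (fun _ => norm_nonneg _) (fun _ => norm_nonneg _)
  have key := MeasureTheory.hasSum_integral_of_summable_integral_norm
    (μ := volume.restrict (Set.Ioc (-Real.pi) Real.pi)) (F := F)
    (fun p => by
      have : Continuous (F p) := by fun_prop
      exact (this.intervalIntegrable (-Real.pi) Real.pi).1)
    (by
      simp only [hFn, integral_const]
      exact hsum.const_smul _)
  have h1 : ((∫ θ in (-Real.pi)..Real.pi,
      ‖∑' k, a k * Complex.exp (k * I * θ)‖ ^ 2 : ℝ) : ℂ) =
      ∑' p : ℕ × ℕ, ((starRingEnd ℂ) (a p.1) * a p.2) *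
        (if p.1 = p.2 then (2 * Real.pi : ℂ) else 0) := by
    rw [← intervalIntegral.integral_ofReal]
    simp only [hpt]
    rw [intervalIntegral.integral_of_le hpi, ← key.tsum_eq]
    refine tsum_congr fun p => ?_
    rw [← integral_exp_circle, ← intervalIntegral.integral_const_mul,
      intervalIntegral.integral_of_le hpi]
  have hinj : Function.Injective (fun k : ℕ => (k, k)) := fun x y h => (Prod.mk.inj h).1
  rw [← hinj.tsum_eq] at h1
  · have h2 : ((∫ θ in (-Real.pi)..Real.pi,
      ‖∑' k, a k * Complex.exp (k * I * θ)‖ ^ 2 : ℝ) : ℂ) =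
       ((2 * Real.pi * ∑' k, ‖a k‖ ^ 2 : ℝ) : ℂ) := by
      rw [h1, ← tsum_mul_left, Complex.ofReal_tsum]
      refine tsum_congr fun k => ?_
      simp only [if_true, Complex.conj_mul']
      push_cast; ring
    exact_mod_cast h2
  · rintro ⟨j, k⟩ hp
    simp only [Function.mem_support] at hp
    by_cases h : j = k
    · subst h; exact ⟨j, rfl⟩
    · exact absurd (by simp [h]) hp

/-- The `k`-th Taylor coefficient of `g` at the origin. -/
noncomputable def taylorCoeff (g : ℂ → ℂ) (k : ℕ) : ℂ :=
  (k.factorial : ℂ)⁻¹ * iteratedDeriv k g 0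

theorem hasSum_taylorCoeff {g : ℂ → ℂ} (hg : DifferentiableOn ℂ g (ball 0 1)) {z : ℂ}
    (hz : z ∈ ball (0:ℂ) 1) : HasSum (fun k => taylorCoeff g k * z ^ k) (g z) := by
  have := Complex.hasSum_taylorSeries_on_ball (c := 0) (r := 1) (f := g) (by simpa using hg)
    (by simpa using hz)
  refine this.congr_fun ?_ 
  intro k
  simp only [taylorCoeff, smul_eq_mul, sub_zero]; ring

theorem lintegral_circle {L : ℂ → ℂ} (hL : DifferentiableOn ℂ L (ball 0 1)) {r : ℝ}
    (hr : r ∈ Set.Ioo (0:ℝ) 1) :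
    ∫⁻ θ in Set.Ioo (-Real.pi) Real.pi, ‖L (r * (Real.cos θ + Real.sin θ * I))‖ₑ ^ 2 =
      ENNReal.ofReal (2 * Real.pi) *
        ∑' k, ‖taylorCoeff L k‖ₑ ^ 2 * ENNReal.ofReal (r ^ (2 * k)) := by
  have hz : ∀ θ : ℝ, (r * (Real.cos θ + Real.sin θ * I) : ℂ) = r * Complex.exp (θ * I) := by
    intro θ
    rw [Complex.exp_mul_I]; push_cast; ring
  have hmem : ∀ θ : ℝ, (r * Complex.exp (θ * I) : ℂ) ∈ ball (0:ℂ) 1 := by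
    intro θ
    rw [mem_ball_zero_iff, norm_mul, Complex.norm_exp_ofReal_mul_I, mul_one, Complex.norm_real,
      Real.norm_of_nonneg hr.1.le]
    exact hr.2
  have hsum : Summable fun k => ‖taylorCoeff L k * (r:ℂ) ^ k‖ := by
    have := (hasSum_taylorCoeff hL (hmem 0)).summable.norm
    simpa using this
  have hpt : ∀ θ : ℝ, L (r * (Real.cos θ + Real.sin θ * I)) =
      ∑' k, (taylorCoeff L k * (r:ℂ) ^ k) * Complex.exp (k * I * θ) := by
    intro θ
    rw [hz, ← (hasSum_taylorCoeff hL (hmem θ)).tsum_eq]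
    refine tsum_congr fun k => ?_
    rw [mul_pow, ← Complex.exp_nat_mul]
    ring_nf
  have hcont : Continuous fun θ : ℝ => L (r * (Real.cos θ + Real.sin θ * I)) := by
    rw [continuous_iff_continuousAt]
    intro θ
    refine ContinuousAt.comp (g := L) ?_ (by fun_prop)
    rw [hz]
    exact (hL.differentiableAt (isOpen_ball.mem_nhds (hmem θ))).continuousAt
  have hpi : -Real.pi ≤ Real.pi := by linarith [Real.pi_pos]
  have hsq : Summable fun k => ‖taylorCoeff L k * (r:ℂ) ^ k‖ ^ 2 := by
    refine (hsum.mul_of_nonneg hsum (fun _ => norm_nonneg _)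
      (fun _ => norm_nonneg _)).comp_injective (i := fun k : ℕ => (k, k))
        (fun x y h => (Prod.mk.inj h).1) |>.congr ?_
    intro k
    simp [sq]
  calc _ = ∫⁻ θ in Set.Ioc (-Real.pi) Real.pi,
        ENNReal.ofReal (‖L (r * (Real.cos θ + Real.sin θ * I))‖ ^ 2) := by
        rw [restrict_Ioo_eq_restrict_Ioc]
        refine lintegral_congr fun θ => ?_
        rw [ENNReal.ofReal_pow (norm_nonneg _), ofReal_norm]
    _ = ENNReal.ofReal (∫ θ in (-Real.pi)..Real.pi,
        ‖L (r * (Real.cos θ + Real.sin θ * I))‖ ^ 2) := by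
        rw [intervalIntegral.integral_of_le hpi, ofReal_integral_eq_lintegral_ofReal]
        · exact ((hcont.norm.pow 2).intervalIntegrable (-Real.pi) Real.pi).1
        · exact Filter.Eventually.of_forall fun _ => by positivity
    _ = _ := by
        simp only [hpt]
        rw [parseval_circle _ hsum, ENNReal.ofReal_mul (by positivity),
          ENNReal.ofReal_tsum_of_nonneg (fun _ => by positivity) hsq]
        congr 1
        refine tsum_congr fun k => ?_
        rw [norm_mul, mul_pow, ENNReal.ofReal_mul (by positivity),
          ENNReal.ofReal_pow (norm_nonneg _), ofReal_norm, norm_pow, Complex.norm_real,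
          Real.norm_of_nonneg hr.1.le, ← pow_mul, mul_comm k 2]

theorem measurable_indicator_ball {L : ℂ → ℂ} (hL : DifferentiableOn ℂ L (ball 0 1)) :
    Measurable ((ball (0:ℂ) 1).indicator L) := by
  classical
  rw [← Set.piecewise_eq_indicator]
  exact hL.continuousOn.measurable_piecewise continuousOn_const measurableSet_ball

/-! ### Weighted Bergman norms in terms of Taylor coefficients -/

/-- The radial moment `∫₀¹ r^(2k+1) (1-r²)^n dr`, which is, up to the factor `2π`, the squared norm
of `z^k` in the Bergman space with weight `(1-|z|²)^n`. -/
noncomputable def radialMoment (n k : ℕ) : ℝ :=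
  ∫ r in (0:ℝ)..1, r ^ (2 * k + 1) * (1 - r ^ 2) ^ n

theorem ofReal_radialMoment (n k : ℕ) : ENNReal.ofReal (radialMoment n k) =
    ∫⁻ r in Set.Ioo (0:ℝ) 1, ENNReal.ofReal (r ^ (2 * k + 1) * (1 - r ^ 2) ^ n) := by
  rw [radialMoment, intervalIntegral.integral_of_le zero_le_one, restrict_Ioo_eq_restrict_Ioc,
    ofReal_integral_eq_lintegral_ofReal]
  · exact ((by fun_prop : Continuous fun r : ℝ => r ^ (2 * k + 1) * (1 - r ^ 2) ^ n
      ).intervalIntegrable 0 1).1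
  · refine (ae_restrict_iff' measurableSet_Ioc).2 (Filter.Eventually.of_forall fun r hr => ?_)
    have h1 : 0 ≤ 1 - r ^ 2 := by nlinarith [hr.1, hr.2]
    have h0 := hr.1.le
    simp only [Pi.zero_apply]
    positivity

theorem radialMoment_pos (n k : ℕ) : 0 < radialMoment n k := by
  rw [radialMoment]
  refine intervalIntegral.intervalIntegral_pos_of_pos_on
    ((by fun_prop : Continuous _).intervalIntegrable 0 1) (fun r hr => ?_) zero_lt_one
  have h1 : 0 < 1 - r ^ 2 := by nlinarith [hr.1, hr.2]
  have h0 := hr.1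
  positivity

/-- Integration of the derivative of `r^(2k+2) (1-r²)^(n+1)`, which vanishes at both endpoints. -/
theorem radialMoment_succ (n k : ℕ) :
    ((k:ℝ) + 1) * radialMoment n k =
      ((k:ℝ) + n + 2) * radialMoment n (k + 1) := by
  have hd : ∀ r ∈ Set.uIcc (0:ℝ) 1, HasDerivAt
      (fun r : ℝ => r ^ (2 * k + 2) * (1 - r ^ 2) ^ (n + 1))
      (2 * (((k:ℝ) + 1) * (r ^ (2 * k + 1) * (1 - r ^ 2) ^ n) -
        ((k:ℝ) + n + 2) * (r ^ (2 * (k + 1) + 1) * (1 - r ^ 2) ^ n))) r := by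
    intro r _
    have h1 := hasDerivAt_pow (2 * k + 2) r
    have h2 := (((hasDerivAt_pow 2 r).const_sub 1).pow (n + 1))
    refine (h1.mul h2).congr_deriv ?_
    push_cast
    simp only [Pi.pow_apply]
    ring
  have h := intervalIntegral.integral_eq_sub_of_hasDerivAt hd
    ((by fun_prop : Continuous _).intervalIntegrable 0 1)
  rw [intervalIntegral.integral_const_mul, intervalIntegral.integral_sub
    ((by fun_prop : Continuous _).intervalIntegrable 0 1)
    ((by fun_prop : Continuous _).intervalIntegrable 0 1),
    intervalIntegral.integral_const_mul, intervalIntegral.integral_const_mul] at h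
  norm_num at h
  rw [radialMoment, radialMoment]
  linarith

theorem antitone_weighted_radialMoment {n : ℕ} (hn : 1 ≤ n) :
    Antitone fun k : ℕ => ((k:ℝ) + 1) * (k + 2) * radialMoment n k := by
  refine antitone_nat_of_succ_le fun k => ?_
  have h := radialMoment_succ n k
  have hp := radialMoment_pos n (k + 1)
  set x := radialMoment n (k + 1)
  have hn' : (1:ℝ) ≤ n := by exact_mod_cast hn
  have hk : (0:ℝ) ≤ k := k.cast_nonneg
  rw [mul_right_comm ((k:ℝ) + 1), h]
  push_cast
  nlinarith [mul_nonneg (mul_nonneg (sub_nonneg.2 hn') hp.le) (by linarith : (0:ℝ) ≤ k + 2)]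

/-- Monomials are orthogonal in the Bergman space with weight `(1-|z|²)^n`. The identity holds in
`[0, ∞]`, so it needs no integrability of `L`. -/
theorem bergman {L : ℂ → ℂ} (hL : DifferentiableOn ℂ L (ball 0 1)) (n : ℕ) :
    ∫⁻ z in ball (0:ℂ) 1, ‖L z‖ₑ ^ 2 * ENNReal.ofReal ((1 - ‖z‖ ^ 2) ^ n) =
      ENNReal.ofReal (2 * Real.pi) *
        ∑' k, ‖taylorCoeff L k‖ₑ ^ 2 * ENNReal.ofReal (radialMoment n k) := by
  set F : ℂ → ℝ≥0∞ := fun z => ‖L z‖ₑ ^ 2 * ENNReal.ofReal ((1 - ‖z‖ ^ 2) ^ n) with hF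
  have hFm : Measurable ((ball (0:ℂ) 1).indicator F) := by
    have hi : (ball (0:ℂ) 1).indicator F = fun z => ‖(ball (0:ℂ) 1).indicator L z‖ₑ ^ 2 *
        ENNReal.ofReal ((1 - ‖z‖ ^ 2) ^ n) := by
      ext z
      by_cases h : z ∈ ball (0:ℂ) 1 <;> simp [h, hF]
    have hm := measurable_indicator_ball hL
    rw [hi]
    fun_prop
  have hpc : ∀ p : ℝ × ℝ, p.1 ∈ Set.Ioi (0:ℝ) →
      ENNReal.ofReal p.1 • (ball (0:ℂ) 1).indicator F (Complex.polarCoord.symm p) =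
      (Set.Ioo (0:ℝ) 1).indicator (fun r => ENNReal.ofReal (r * (1 - r ^ 2) ^ n)) p.1 *
        ‖L (p.1 * (Real.cos p.2 + Real.sin p.2 * I))‖ₑ ^ 2 := by
    intro p hp
    have hn : ‖Complex.polarCoord.symm p‖ = p.1 := by
      rw [Complex.norm_polarCoord_symm, abs_of_pos hp]
    by_cases h : p.1 < 1
    · rw [Set.indicator_of_mem (by rw [mem_ball_zero_iff, hn]; exact h),
        Set.indicator_of_mem (show p.1 ∈ Set.Ioo (0:ℝ) 1 from ⟨hp, h⟩)]
      simp only [hF, hn, smul_eq_mul]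
      rw [ENNReal.ofReal_mul (le_of_lt hp), Complex.polarCoord_symm_apply]
      ring
    · rw [Set.indicator_of_notMem (by rw [mem_ball_zero_iff, hn]; exact h),
        Set.indicator_of_notMem (fun h' => h h'.2)]
      simp
  have hgm : Measurable fun p : ℝ × ℝ => ENNReal.ofReal p.1 • (ball (0:ℂ) 1).indicator F
      (Complex.polarCoord.symm p) := by
    have : Measurable fun p : ℝ × ℝ => Complex.polarCoord.symm p := by
      simp only [Complex.polarCoord_symm_apply]
      fun_prop
    exact (by fun_prop : Measurable fun p : ℝ × ℝ => ENNReal.ofReal p.1).mul (hFm.comp this)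
  rw [← lintegral_indicator measurableSet_ball, ← Complex.lintegral_comp_polarCoord_symm,
    show polarCoord.target = Set.Ioi (0:ℝ) ×ˢ Set.Ioo (-Real.pi) Real.pi from rfl,
    Measure.volume_eq_prod, setLIntegral_prod _ hgm.aemeasurable]
  calc _ = ∫⁻ r in Set.Ioi (0:ℝ), (Set.Ioo (0:ℝ) 1).indicator (fun r =>
        ENNReal.ofReal (2 * Real.pi) *
        ∑' k, ‖taylorCoeff L k‖ₑ ^ 2 *
          ENNReal.ofReal (r ^ (2 * k + 1) * (1 - r ^ 2) ^ n)) r := by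
        refine setLIntegral_congr_fun measurableSet_Ioi fun r hr => ?_
        simp only [hpc (r, _) hr]
        by_cases h : r < 1
        · have hr' : r ∈ Set.Ioo (0:ℝ) 1 := ⟨hr, h⟩
          simp only [Set.indicator_of_mem hr']
          rw [lintegral_const_mul' _ _ ENNReal.ofReal_ne_top, lintegral_circle hL hr',
            mul_left_comm, ← ENNReal.tsum_mul_left]
          congr 1
          refine tsum_congr fun k => ?_
          rw [mul_left_comm, ← ENNReal.ofReal_mul]
          · congr 2; ring
          · have : 0 ≤ 1 - r ^ 2 := by nlinarith [hr'.1, hr'.2]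
            have := hr'.1
            positivity
        · have hr' : r ∉ Set.Ioo (0:ℝ) 1 := fun h' => h h'.2
          simp [Set.indicator_of_notMem hr']
    _ = _ := by
        rw [lintegral_indicator measurableSet_Ioo, Measure.restrict_restrict measurableSet_Ioo,
          Set.inter_eq_left.2 (fun x hx => hx.1), lintegral_const_mul' _ _ ENNReal.ofReal_ne_top,
          lintegral_tsum (fun k => by fun_prop)]
        congr 1
        refine tsum_congr fun k => ?_
        rw [lintegral_const_mul' _ _ (by simp), ofReal_radialMoment]

/-! ### A discrete Hardy inequality -/

theorem sum_inv_le_one (N : ℕ) :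
    ∑ i ∈ Finset.range N, (1:ℝ) / (((i:ℝ) + 1) * (i + 2)) ≤ 1 := by
  have : ∑ i ∈ Finset.range N, (1:ℝ) / (((i:ℝ) + 1) * (i + 2)) = 1 - 1 / ((N:ℝ) + 1) := by
    induction N with
    | zero => simp
    | succ N ih =>
      rw [Finset.sum_range_succ, ih]
      push_cast
      field_simp
      ring
  rw [this]
  have : 0 ≤ 1 / ((N:ℝ) + 1) := by positivity
  linarith

/-- A discrete weighted Hardy inequality. The recurrence solves to
`a_{k+1} = b_k / (k+1) + a_0 + ∑_{i<k} b_i / ((i+1)(i+2))`; monotonicity of `(k+1)(k+2) β_k` then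
controls the last sum by Cauchy–Schwarz. -/
theorem discrete_hardy {β : ℕ → ℝ} (hβ : ∀ k, 0 < β k)
    (hγ : Antitone fun k : ℕ => ((k:ℝ) + 1) * (k + 2) * β k) {a b : ℕ → ℂ}
    (h0 : a 1 = a 0 + b 0)
    (hab : ∀ k : ℕ, ((k:ℂ) + 2) * (a (k + 2) - a (k + 1)) = b (k + 1) - b k) {B : ℝ}
    (hB : ∀ N, ∑ k ∈ Finset.range N, ‖b k‖ ^ 2 * β k ≤ B) (N : ℕ) :
    ∑ k ∈ Finset.range N, ‖a k‖ ^ 2 * β k ≤ 7 * (‖a 0‖ ^ 2 * β 0) + 6 * B := by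
  have hB0 : 0 ≤ B := by simpa using hB 0
  have hform : ∀ k : ℕ, a (k + 1) = b k / ((k:ℂ) + 1) + a 0 +
      ∑ i ∈ Finset.range k, b i / (((i:ℂ) + 1) * (i + 2)) := by
    intro k
    induction k with
    | zero => simp [h0, add_comm]
    | succ k ih =>
      have h1 : (k:ℂ) + 1 ≠ 0 := by exact_mod_cast k.succ_ne_zero
      have h2 : (k:ℂ) + 2 ≠ 0 := by exact_mod_cast (k + 1).succ_ne_zero
      have h3 : a (k + 2) = a (k + 1) + (b (k + 1) - b k) / ((k:ℂ) + 2) := by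
        rw [← hab k]; field_simp; ring
      rw [Finset.sum_range_succ, h3, ih]
      push_cast
      rw [show (k:ℂ) + 1 + 1 = k + 2 by ring]
      field_simp
      ring
  have hterm : ∀ k : ℕ, ‖a (k + 1)‖ ^ 2 * β (k + 1) ≤ 3 * (‖b k‖ ^ 2 * β k) +
      (6 * (‖a 0‖ ^ 2 * β 0) + 3 * B) * (1 / (((k:ℝ) + 1) * (k + 2))) := by
    intro k
    set t : ℝ := 1 / (((k:ℝ) + 1) * (k + 2)) with ht
    have htp : 0 < t := by positivity
    set S : ℝ := ∑ i ∈ Finset.range k, ‖b i‖ / (((i:ℝ) + 1) * (i + 2)) with hS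
    have hnorm : ‖a (k + 1)‖ ≤ ‖b k‖ / ((k:ℝ) + 1) + ‖a 0‖ + S := by
      rw [hform k]
      refine (norm_add_le _ _).trans (add_le_add ((norm_add_le _ _).trans ?_)
        ((norm_sum_le _ _).trans ?_))
      · rw [norm_div]
        have : ‖(k:ℂ) + 1‖ = (k:ℝ) + 1 := by
          exact_mod_cast Complex.norm_natCast (k + 1)
        rw [this]
      · refine Finset.sum_le_sum fun i _ => ?_
        have h1 : ‖(i:ℂ) + 1‖ = (i:ℝ) + 1 := by exact_mod_cast Complex.norm_natCast (i + 1)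
        have h2 : ‖(i:ℂ) + 2‖ = (i:ℝ) + 2 := by exact_mod_cast Complex.norm_natCast (i + 2)
        rw [norm_div, norm_mul, h1, h2]
    have hγk : 0 < ((k:ℝ) + 1) * (k + 2) * β k := mul_pos (by positivity) (hβ k)
    -- Cauchy–Schwarz after splitting `‖b i‖ / ((i+1)(i+2))` as
    -- `‖b i‖ √β_i` times `1 / ((i+1)(i+2) √β_i)`.
    have hS2 : S ^ 2 ≤ B * (1 / (((k:ℝ) + 1) * (k + 2) * β k)) := by
      calc S ^ 2 ≤ (∑ i ∈ Finset.range k, ‖b i‖ ^ 2 * β i) *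
            ∑ i ∈ Finset.range k, 1 / (((i:ℝ) + 1) * (i + 2)) *
              (1 / (((i:ℝ) + 1) * (i + 2) * β i)) := by
            refine Finset.sum_sq_le_sum_mul_sum_of_sq_le_mul _ (fun i _ => ?_) (fun i _ => ?_)
              (fun i _ => ?_)
            · have := hβ i; positivity
            · have := hβ i; positivity
            · have := (hβ i).ne'
              refine le_of_eq ?_
              field_simp
        _ ≤ B * (1 / (((k:ℝ) + 1) * (k + 2) * β k)) := by
            refine mul_le_mul (hB k) ?_ (Finset.sum_nonneg fun i _ => ?_) hB0
            · calc _ ≤ ∑ i ∈ Finset.range k, 1 / (((i:ℝ) + 1) * (i + 2)) *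
                    (1 / (((k:ℝ) + 1) * (k + 2) * β k)) := by
                    refine Finset.sum_le_sum fun i hi => ?_
                    refine mul_le_mul_of_nonneg_left ?_ (by positivity)
                    exact one_div_le_one_div_of_le hγk (hγ (Finset.mem_range.1 hi).le)
                _ ≤ _ := by
                    rw [← Finset.sum_mul]
                    exact mul_le_of_le_one_left (by positivity) (sum_inv_le_one k)
            · have := hβ i; positivity
    have hstep : ((k:ℝ) + 1 + 1) * (k + 1 + 2) * β (k + 1) ≤ ((k:ℝ) + 1) * (k + 2) * β k := by
      simpa using hγ (Nat.le_succ k)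
    have hb1 : 0 < β (k + 1) := hβ _
    have hk : (0:ℝ) ≤ k := k.cast_nonneg
    have hβle : β (k + 1) ≤ β k := by
      by_contra! hlt
      nlinarith [mul_pos (by positivity : 0 < ((k:ℝ) + 1) * (k + 2)) (sub_pos.2 hlt), hb1]
    have hle : ∀ c : ℝ, ((k:ℝ) + 1) * (k + 2) * β k ≤ c → β (k + 1) ≤ c * t := by
      intro c hc
      rw [ht, mul_one_div, le_div_iff₀ (by positivity)]
      nlinarith [mul_nonneg hk hb1.le]
    have hβ0 : β (k + 1) ≤ 2 * β 0 * t := hle _ (by simpa using hγ (Nat.zero_le k))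
    have hSβ : S ^ 2 * β (k + 1) ≤ B * t := by
      calc S ^ 2 * β (k + 1) ≤ (B * (1 / (((k:ℝ) + 1) * (k + 2) * β k))) *
            (((k:ℝ) + 1) * (k + 2) * β k * t) :=
            mul_le_mul hS2 (hle _ le_rfl) hb1.le (by positivity)
        _ = B * t := by
            have := (hβ k).ne'
            field_simp
    have hbk : (‖b k‖ / ((k:ℝ) + 1)) ^ 2 * β (k + 1) ≤ ‖b k‖ ^ 2 * β k := by
      refine mul_le_mul ?_ hβle hb1.le (by positivity)
      exact pow_le_pow_left₀ (by positivity)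
        (div_le_self (norm_nonneg _) (by linarith)) 2
    have ha0 : ‖a 0‖ ^ 2 * β (k + 1) ≤ ‖a 0‖ ^ 2 * (2 * β 0 * t) :=
      mul_le_mul_of_nonneg_left hβ0 (by positivity)
    have hsq : ‖a (k + 1)‖ ^ 2 ≤ 3 * ((‖b k‖ / ((k:ℝ) + 1)) ^ 2 + ‖a 0‖ ^ 2 + S ^ 2) := by
      refine (pow_le_pow_left₀ (norm_nonneg _) hnorm 2).trans ?_
      set x := ‖b k‖ / ((k:ℝ) + 1)
      nlinarith [sq_nonneg (x - ‖a 0‖), sq_nonneg (x - S), sq_nonneg (‖a 0‖ - S)]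
    have := mul_le_mul_of_nonneg_right hsq hb1.le
    linarith
  have hβ0 := hβ 0
  cases N with
  | zero => simp only [Finset.range_zero, Finset.sum_empty]; positivity
  | succ N =>
    rw [Finset.sum_range_succ']
    have h1 := Finset.sum_le_sum fun k (_ : k ∈ Finset.range N) => hterm k
    rw [Finset.sum_add_distrib, ← Finset.mul_sum, ← Finset.mul_sum] at h1
    have h2 := mul_le_mul_of_nonneg_left (sum_inv_le_one N)
      (by positivity : 0 ≤ 6 * (‖a 0‖ ^ 2 * β 0) + 3 * B)
    have h3 := hB N
    linarith

/-! ### The estimate at a single boundary point -/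

theorem taylorCoeff_deriv (g : ℂ → ℂ) (k : ℕ) :
    taylorCoeff (deriv g) k = ((k:ℂ) + 1) * taylorCoeff g (k + 1) := by
  have h1 : (k:ℂ) + 1 ≠ 0 := by exact_mod_cast k.succ_ne_zero
  have h2 : (k.factorial : ℂ) ≠ 0 := by exact_mod_cast k.factorial_ne_zero
  rw [taylorCoeff, taylorCoeff, iteratedDeriv_succ', Nat.factorial_succ]
  push_cast
  field_simp

theorem taylorCoeff_zero (g : ℂ → ℂ) : taylorCoeff g 0 = g 0 := by simp [taylorCoeff]

/-- Multiplication by `z - ζ` on the level of Taylor coefficients. -/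
theorem taylorCoeff_sub_mul {G L : ℂ → ℂ} (hL : DifferentiableOn ℂ L (ball 0 1)) {ζ : ℂ}
    (h : ∀ z ∈ ball (0:ℂ) 1, G z = (z - ζ) * L z) (k : ℕ) :
    taylorCoeff G (k + 1) = taylorCoeff L k - ζ * taylorCoeff L (k + 1) := by
  have h0 : ball (0:ℂ) 1 ∈ nhds (0:ℂ) := ball_mem_nhds _ one_pos
  have hcd : ∀ m : ℕ, ContDiffAt ℂ m L 0 := fun m =>
    ((hL.analyticAt h0).contDiffAt)
  have he : G =ᶠ[nhds 0] fun z => (z - ζ) * L z := Filter.eventually_of_mem h0 h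
  have hd : deriv (fun z : ℂ => z - ζ) = fun _ => 1 := by
    ext z; simp
  have h1 : (k:ℂ) + 1 ≠ 0 := by exact_mod_cast k.succ_ne_zero
  have h2 : (k.factorial : ℂ) ≠ 0 := by exact_mod_cast k.factorial_ne_zero
  rw [taylorCoeff, he.iteratedDeriv_eq, iteratedDeriv_fun_mul (by fun_prop) (hcd _),
    Finset.sum_range_succ', Finset.sum_range_succ', Finset.sum_eq_zero, taylorCoeff, taylorCoeff,
    Nat.factorial_succ]
  · simp [iteratedDeriv_succ', hd, iteratedDeriv_const]
    field_simp
    ring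
  · intro i _
    simp [iteratedDeriv_succ', hd, iteratedDeriv_const]

/-- The weighted Dirichlet integral at a single boundary point: the integral of
`|g|² P_μ (1-|z|²)^(n-1)` over the disc with respect to Lebesgue measure (not normalized), for `μ`
the unit point mass at `ζ`. -/
noncomputable def localDirichlet (n : ℕ) (g : ℂ → ℂ) (ζ : ℂ) : ℝ≥0∞ :=
  ∫⁻ z in ball (0:ℂ) 1, ‖g z‖ₑ ^ 2 * ENNReal.ofReal ((1 - ‖z‖ ^ 2) / ‖z - ζ‖ ^ 2) *
    ENNReal.ofReal ((1 - ‖z‖ ^ 2) ^ (n - 1))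

theorem sub_ne_zero_of_mem {ζ z : ℂ} (hζ : ‖ζ‖ = 1) (hz : z ∈ ball (0:ℂ) 1) : z - ζ ≠ 0 := by
  intro h
  rw [mem_ball_zero_iff, sub_eq_zero.1 h, hζ] at hz
  exact lt_irrefl _ hz

theorem differentiableOn_quot {g : ℂ → ℂ} (hg : DifferentiableOn ℂ g (ball 0 1)) {ζ : ℂ}
    (hζ : ‖ζ‖ = 1) : DifferentiableOn ℂ (fun z => g z / (z - ζ)) (ball 0 1) :=
  hg.fun_div (by fun_prop) fun _ hz => sub_ne_zero_of_mem hζ hz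

/-- Dividing by `z - ζ` turns the harmonic weight into the radial Bergman weight. -/
theorem localDirichlet_eq {n : ℕ} (hn : 1 ≤ n) {g : ℂ → ℂ}
    (hg : DifferentiableOn ℂ g (ball 0 1)) {ζ : ℂ} (hζ : ‖ζ‖ = 1) :
    localDirichlet n g ζ = ENNReal.ofReal (2 * Real.pi) *
      ∑' k, ‖taylorCoeff (fun z => g z / (z - ζ)) k‖ₑ ^ 2 * ENNReal.ofReal (radialMoment n k) := by
  rw [← bergman (differentiableOn_quot hg hζ), localDirichlet]
  refine setLIntegral_congr_fun measurableSet_ball fun z hz => ?_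
  have hne := norm_pos_iff.2 (sub_ne_zero_of_mem hζ hz)
  have h1 : 0 ≤ 1 - ‖z‖ ^ 2 := by
    have := mem_ball_zero_iff.1 hz
    nlinarith [norm_nonneg z]
  obtain ⟨m, rfl⟩ : ∃ m, n = m + 1 := ⟨n - 1, by omega⟩
  simp only [Nat.add_sub_cancel, ← ofReal_norm]
  rw [← ENNReal.ofReal_pow (norm_nonneg _), ← ENNReal.ofReal_pow (norm_nonneg _),
    ← ENNReal.ofReal_mul (by positivity), ← ENNReal.ofReal_mul (by positivity),
    ← ENNReal.ofReal_mul (by positivity), norm_div]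
  congr 1
  field_simp
  ring

/-- The key estimate: the integral of `g` is controlled by `g 0` and the integral of `g'`, with
constants that do not depend on the boundary point `ζ`. -/
theorem localDirichlet_le {n : ℕ} (hn : 1 ≤ n) {g : ℂ → ℂ}
    (hg : DifferentiableOn ℂ g (ball 0 1)) {ζ : ℂ} (hζ : ‖ζ‖ = 1) :
    localDirichlet n g ζ ≤
      ENNReal.ofReal (2 * Real.pi * (7 * (‖g 0‖ ^ 2 * radialMoment n 0))) +
        6 * localDirichlet n (deriv g) ζ := by
  have hg' : DifferentiableOn ℂ (deriv g) (ball 0 1) := hg.deriv isOpen_ball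
  rw [localDirichlet_eq hn hg hζ, localDirichlet_eq hn hg' hζ]
  have hL := differentiableOn_quot hg hζ
  have hM := differentiableOn_quot hg' hζ
  set L := fun z => g z / (z - ζ) with hLdef
  set M := fun z => deriv g z / (z - ζ) with hMdef
  have hgL : ∀ z ∈ ball (0:ℂ) 1, g z = (z - ζ) * L z := fun z hz =>
    (mul_div_cancel₀ _ (sub_ne_zero_of_mem hζ hz)).symm
  have hgM : ∀ z ∈ ball (0:ℂ) 1, deriv g z = (z - ζ) * M z := fun z hz =>
    (mul_div_cancel₀ _ (sub_ne_zero_of_mem hζ hz)).symm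
  have hpi := Real.pi_pos
  set T := ∑' k, ‖taylorCoeff M k‖ₑ ^ 2 * ENNReal.ofReal (radialMoment n k) with hT
  by_cases hTtop : T = ⊤
  · rw [hTtop, ENNReal.mul_top (by simpa using hpi), ENNReal.mul_top (by norm_num), add_top]
    exact le_top
  have hconv : ∀ (G : ℂ → ℂ) (k : ℕ), ‖taylorCoeff G k‖ₑ ^ 2 * ENNReal.ofReal (radialMoment n k) =
      ENNReal.ofReal (‖taylorCoeff G k‖ ^ 2 * radialMoment n k) := fun G k => by
    rw [ENNReal.ofReal_mul (by positivity), ENNReal.ofReal_pow (norm_nonneg _), ofReal_norm]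
  have hpos := radialMoment_pos n
  have hnn : ∀ (G : ℂ → ℂ) (k : ℕ), 0 ≤ ‖taylorCoeff G k‖ ^ 2 * radialMoment n k := fun G k =>
    mul_nonneg (by positivity) (hpos k).le
  have hB : ∀ N, ∑ k ∈ Finset.range N, ‖ζ ^ (k + 1) * taylorCoeff M k‖ ^ 2 * radialMoment n k ≤
      T.toReal := by
    intro N
    simp only [norm_mul, norm_pow, hζ, one_pow, one_mul]
    rw [← ENNReal.ofReal_le_iff_le_toReal hTtop, ENNReal.ofReal_sum_of_nonneg fun k _ => hnn M k]
    simp only [← hconv]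
    exact ENNReal.sum_le_tsum _
  have hM0 : taylorCoeff (deriv g) 0 = -ζ * taylorCoeff M 0 := by
    rw [taylorCoeff_zero, taylorCoeff_zero, hgM 0 (mem_ball_self one_pos)]; ring
  have hrec0 := taylorCoeff_deriv g 0
  rw [hM0, taylorCoeff_sub_mul hL hgL] at hrec0
  -- The factors `ζ^k` remove `ζ` from the recurrence and do not change the norms.
  have hH := discrete_hardy (β := radialMoment n) hpos (antitone_weighted_radialMoment hn)
    (a := fun k => ζ ^ k * taylorCoeff L k) (b := fun k => ζ ^ (k + 1) * taylorCoeff M k)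
    (by
      simp only [Nat.cast_zero, zero_add, one_mul] at hrec0
      simp only [pow_zero, one_mul, zero_add, pow_one]
      linear_combination hrec0)
    (by
      intro k
      have h := taylorCoeff_deriv g (k + 1)
      rw [taylorCoeff_sub_mul hL hgL, taylorCoeff_sub_mul hM hgM] at h
      push_cast at h
      linear_combination ζ ^ (k + 1) * h) hB
  have hL0 : ‖taylorCoeff L 0‖ = ‖g 0‖ := by
    rw [taylorCoeff_zero, hLdef]; simp [hζ]
  simp only [norm_mul, norm_pow, hζ, one_pow, one_mul, hL0] at hH
  have hA : 0 ≤ 7 * (‖g 0‖ ^ 2 * radialMoment n 0) := by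
    have := (hpos 0).le
    positivity
  have hS : ∑' k, ‖taylorCoeff L k‖ₑ ^ 2 * ENNReal.ofReal (radialMoment n k) ≤
      ENNReal.ofReal (7 * (‖g 0‖ ^ 2 * radialMoment n 0)) + 6 * T := by
    rw [ENNReal.tsum_eq_iSup_nat]
    refine iSup_le fun N => ?_
    simp only [hconv]
    rw [← ENNReal.ofReal_sum_of_nonneg fun k _ => hnn L k]
    refine (ENNReal.ofReal_le_ofReal (hH N)).trans ?_
    rw [ENNReal.ofReal_add hA (by positivity), ENNReal.ofReal_mul (p := 6) (by norm_num),
      ENNReal.ofReal_toReal hTtop]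
    simp
  calc _ ≤ _ := mul_le_mul_right hS _
    _ = _ := by
      rw [mul_add, ← ENNReal.ofReal_mul (by positivity), mul_left_comm _ 6 T]

/-! ### Integration over the boundary measure -/

/-- Tonelli: integration against `P_μ` is the `μ`-average of the integrals at single points. -/
theorem lintegral_Pmu_eq (n : ℕ) (μ : Measure ℂ) [IsFiniteMeasure μ] {g : ℂ → ℂ}
    (hg : DifferentiableOn ℂ g (ball 0 1)) :
    ∫⁻ z in ball (0:ℂ) 1, ‖g z‖ₑ ^ 2 * Pmu μ z * ENNReal.ofReal ((1 - ‖z‖ ^ 2) ^ (n - 1)) =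
      ∫⁻ ζ, localDirichlet n g ζ ∂μ := by
  have hm := measurable_indicator_ball hg
  have hind : ∀ h : ℂ → ℝ≥0∞,
      ∫⁻ z in ball (0:ℂ) 1, ‖g z‖ₑ ^ 2 * h z * ENNReal.ofReal ((1 - ‖z‖ ^ 2) ^ (n - 1)) =
      ∫⁻ z in ball (0:ℂ) 1, ‖(ball (0:ℂ) 1).indicator g z‖ₑ ^ 2 * h z *
        ENNReal.ofReal ((1 - ‖z‖ ^ 2) ^ (n - 1)) := fun h =>
    setLIntegral_congr_fun measurableSet_ball fun z hz => by
      simp only [Set.indicator_of_mem hz]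
  simp only [localDirichlet]
  simp only [hind]
  rw [lintegral_lintegral_swap]
  · refine lintegral_congr fun z => ?_
    rw [lintegral_mul_const' _ _ ENNReal.ofReal_ne_top, lintegral_const_mul' _ _ (by simp), Pmu]
  · refine Measurable.aemeasurable ?_
    have : Measurable fun p : ℂ × ℂ => (ball (0:ℂ) 1).indicator g p.2 := hm.comp measurable_snd
    simp only [Function.uncurry_def]
    fun_prop

theorem lintegral_nA (F : ℂ → ℝ≥0∞) :
    ∫⁻ z in ball (0:ℂ) 1, F z ∂nA =
      (ENNReal.ofReal Real.pi)⁻¹ * ∫⁻ z in ball (0:ℂ) 1, F z := by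
  rw [nA, Measure.restrict_smul, lintegral_smul_measure, smul_eq_mul]

theorem step_down {n : ℕ} (hn : 1 ≤ n) (μ : Measure ℂ) [IsFiniteMeasure μ]
    (hμ : μ (sphere (0:ℂ) 1)ᶜ = 0) {g : ℂ → ℂ} (hg : DifferentiableOn ℂ g (ball 0 1))
    (h : ∫⁻ ζ, localDirichlet n (deriv g) ζ ∂μ < ⊤) :
    ∫⁻ ζ, localDirichlet n g ζ ∂μ < ⊤ := by
  have hae : ∀ᵐ ζ ∂μ, ζ ∈ sphere (0:ℂ) 1 := mem_ae_iff.2 hμ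
  refine (lintegral_mono_ae (hae.mono fun ζ hζ =>
    localDirichlet_le hn hg (mem_sphere_zero_iff_norm.1 hζ))).trans_lt ?_
  rw [lintegral_add_left measurable_const, lintegral_const, lintegral_const_mul' _ _ (by norm_num)]
  exact ENNReal.add_lt_top.2 ⟨ENNReal.mul_lt_top ENNReal.ofReal_lt_top (measure_lt_top _ _),
    ENNReal.mul_lt_top (by norm_num) h⟩

theorem differentiableOn_iteratedDeriv {f : ℂ → ℂ} (hf : DifferentiableOn ℂ f (ball 0 1))
    (j : ℕ) : DifferentiableOn ℂ (iteratedDeriv j f) (ball 0 1) := by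
  induction j with
  | zero => simpa using hf
  | succ j ih => rw [iteratedDeriv_succ]; exact ih.deriv isOpen_ball

theorem stmt11 (n : ℕ) (hn : 1 ≤ n) (μ : Measure ℂ) [IsFiniteMeasure μ]
    (hμ0 : μ ≠ 0) (hμ : μ (sphere (0:ℂ) 1)ᶜ = 0)
    (f : ℂ → ℂ) (hf : DifferentiableOn ℂ f (ball (0:ℂ) 1))
    (hfin : Dmu n μ f < ⊤) (j : ℕ) (hj : j ≤ n) :
    (∫⁻ z in ball (0:ℂ) 1, (‖iteratedDeriv j f z‖₊ : ℝ≥0∞) ^ 2 * Pmu μ z *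
      ENNReal.ofReal ((1 - ‖z‖^2)^(n-1)) ∂nA) < ⊤ := by
  have hd := differentiableOn_iteratedDeriv hf
  have hpi : (ENNReal.ofReal Real.pi)⁻¹ < ⊤ := by simp [Real.pi_pos]
  have hpi0 : (ENNReal.ofReal Real.pi)⁻¹ ≠ 0 := by simp
  have hc : ENNReal.ofReal (1 / ((n.factorial : ℝ) * ((n-1).factorial : ℝ))) ≠ 0 := by
    rw [ne_eq, ENNReal.ofReal_eq_zero, not_le]
    positivity
  have htop : ∫⁻ ζ, localDirichlet n (iteratedDeriv n f) ζ ∂μ < ⊤ := by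
    rw [← lintegral_Pmu_eq n μ (hd n)]
    have h := ENNReal.lt_top_of_mul_ne_top_right hfin.ne hc
    rw [lintegral_nA] at h
    exact ENNReal.lt_top_of_mul_ne_top_right h.ne hpi0
  have hall : ∫⁻ ζ, localDirichlet n (iteratedDeriv j f) ζ ∂μ < ⊤ := by
    induction hj using Nat.decreasingInduction with
    | self => exact htop
    | of_succ j _ ih => exact step_down hn μ hμ (hd j) (by rwa [← iteratedDeriv_succ])
  rw [lintegral_nA]
  refine ENNReal.mul_lt_top hpi ?_
  rw [← lintegral_Pmu_eq n μ (hd j)] at hall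
  exact hall
end

section
/- Let μ be a finite positive Borel measure on 𝕋, n ∈ ℕ, and φ holomorphic on 𝔻 with φ^{(n)} bounded on 𝔻. Then φ is a multiplier of H_{μ,n}: for every f with D_{μ,n}(f) < ∞, also D_{μ,n}(φ f) < ∞. -/
/-!
By the Leibniz rule `(φ f)⁽ⁿ⁾` is a combination of the products `φ⁽ⁱ⁾ f⁽ⁿ⁻ⁱ⁾`. The derivatives
`φ⁽ⁱ⁾`, `i ≤ n`, are bounded, since a function with bounded derivative on a disc is bounded. It
remains to see that `f⁽ʲ⁾ ∈ L²(w)` for all `j ≤ n`, where `w(z) = P_μ(z) (1 - |z|²)ⁿ⁻¹`. This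
follows by descending induction on `j` from a weighted Hardy inequality: if `g` is holomorphic and
`g' ∈ L²(w)`, then `g ∈ L²(w)` (`weighted_step`).

By Tonelli it suffices to prove the latter for a unit point mass at `ζ`, `|ζ| = 1`, with constants
independent of `ζ` (`point_estimate`). There it comes from Green's formula. With a radial cutoff
`η(|z|²)` that vanishes for `|z|² ≥ r` and approximates `(1 - |z|²)ⁿ` as `r → 1`, the function
`F = η(|z|²) |g|² (1/(z - ζ) - z̄)` is `C¹` with compact support, so `∫ ∂F/∂z̄ = 0`. Since
`1/(z - ζ)` is holomorphic in the disc,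
`∂F/∂z̄ = η' z |g|² (1/(z - ζ) - z̄) + η g (conj g') (1/(z - ζ) - z̄) - η |g|²`,
and the identity `Re (z/(z - ζ)) = 1/2 - (1 - |z|²)/(2|z - ζ|²)` together with
`η ≤ (1 - |z|²)(-η')` shows that the real part dominates `|g|² η/|z - ζ|²`, up to a multiple of
`|g'|² η/|z - ζ|²` and a term that is positive only on the compact disc `|z|² ≤ 3/4`
(`pointwise_bound`). All the integrals are finite because `η` has compact support in the disc, so
terms may be absorbed freely; Fatou's lemma gives the limit `r → 1`.
-/

open MeasureTheory Metric Complex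
open scoped ENNReal NNReal

/-! ### The radial cutoff -/

theorem max_pow_hasDerivAt (n : ℕ) (hn : 1 ≤ n) (x : ℝ) :
    HasDerivAt (fun x : ℝ => max x 0 ^ (n+1)) ((n+1) * max x 0 ^ n) x := by
  rcases lt_trichotomy x 0 with h | h | h
  · have : (fun x : ℝ => max x 0 ^ (n+1)) =ᶠ[nhds x] fun _ => 0 := by
      filter_upwards [Iio_mem_nhds h] with y hy
      rw [max_eq_right (le_of_lt hy)]; simp
    rw [max_eq_right h.le, zero_pow (by omega), mul_zero]
    exact (hasDerivAt_const x (0:ℝ)).congr_of_eventuallyEq this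
  · subst h
    rw [max_self, zero_pow (by omega), mul_zero, hasDerivAt_iff_isLittleO_nhds_zero]
    have h1 : (fun h : ℝ => h ^ (n+1)) =o[nhds 0] fun h => h := by
      simpa using Asymptotics.isLittleO_pow_pow (𝕜 := ℝ) (show 1 < n+1 by omega)
    refine Asymptotics.IsBigO.trans_isLittleO ?_ h1
    refine Asymptotics.IsBigO.of_bound 1 (Filter.Eventually.of_forall fun h => ?_)
    simp only [zero_add, max_self, ne_eq, Nat.add_eq_zero_iff, one_ne_zero, and_false,
      not_false_eq_true, zero_pow, sub_zero, smul_zero, norm_pow, one_mul]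
    gcongr
    rcases le_total h 0 with h0 | h0
    · rw [max_eq_right h0]; simp
    · rw [max_eq_left h0]
  · have : (fun x : ℝ => max x 0 ^ (n+1)) =ᶠ[nhds x] fun y => y^(n+1) := by
      filter_upwards [Ioi_mem_nhds h] with y hy
      rw [max_eq_left (le_of_lt hy)]
    rw [max_eq_left h.le]
    exact (by simpa using hasDerivAt_pow (n+1) x : HasDerivAt (fun y : ℝ => y^(n+1)) _ x).congr_of_eventuallyEq this

/-- The radial cutoff as a function of `t = |z|²`: `C¹` on `t < 1`, zero for `t ≥ r` (also for
`t ≥ 1`, where the quotient is `0 / (1 - t)`), and tending to `(1 - t)ⁿ` as `r → 1`. The exponent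
`n + 1` makes it `C¹` even for `n = 1`, where `max (r - t) 0 ^ n` is only Lipschitz. -/
noncomputable def cutoff (n : ℕ) (r t : ℝ) : ℝ := max (r - t) 0 ^ (n+1) / (1 - t)

/-- The derivative of `cutoff n r` on `t < 1`. -/
noncomputable def cutoffDeriv (n : ℕ) (r t : ℝ) : ℝ :=
  -((n+1) * max (r - t) 0 ^ n / (1 - t)) + max (r - t) 0 ^ (n+1) / (1 - t)^2

theorem cutoff_hasDerivAt (n : ℕ) (hn : 1 ≤ n) (r t : ℝ) (ht : t < 1) :
    HasDerivAt (cutoff n r) (cutoffDeriv n r t) t := by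
  have h1 : HasDerivAt (fun t => max (r - t) 0 ^ (n+1)) ((n+1) * max (r - t) 0 ^ n * (-1)) t :=
    (max_pow_hasDerivAt n hn (r - t)).comp t ((hasDerivAt_id t).const_sub r)
  have h2 : HasDerivAt (fun t : ℝ => 1 - t) (-1) t := (hasDerivAt_id t).const_sub 1
  have h3 : (1 - t) ≠ 0 := by linarith
  refine (h1.div h2 h3).congr_deriv ?_
  unfold cutoffDeriv
  field_simp
  ring

theorem cutoff_of_le {n : ℕ} {r t : ℝ} (h : r ≤ t) : cutoff n r t = 0 := by
  simp [cutoff, max_eq_right (sub_nonpos.2 h)]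

theorem cutoffDeriv_of_le {n : ℕ} (hn : 1 ≤ n) {r t : ℝ} (h : r ≤ t) : cutoffDeriv n r t = 0 := by
  simp [cutoffDeriv, max_eq_right (sub_nonpos.2 h), zero_pow (show n ≠ 0 by omega)]

theorem cutoff_nonneg {n : ℕ} {r t : ℝ} (ht : t < 1) : 0 ≤ cutoff n r t :=
  div_nonneg (by positivity) (by linarith)

theorem cutoff_le {n : ℕ} {r t : ℝ} (hr : r < 1) (ht : t < 1) : cutoff n r t ≤ (1 - t) ^ n := by
  have h3 : 0 < (1 - t) := by linarith
  rw [cutoff, div_le_iff₀ h3, ← pow_succ]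
  gcongr
  exact max_le (by linarith) h3.le

/-- The differential inequality that makes the boundary-layer term `-η'` control the weight. -/
theorem cutoff_le_deriv {n : ℕ} (hn : 1 ≤ n) {r t : ℝ} (hr : r < 1) (ht : t < 1) :
    cutoff n r t ≤ (1 - t) * (-cutoffDeriv n r t) := by
  have h3 : 0 < (1 - t) := by linarith
  have hp : max (r - t) 0 ≤ 1 - t := max_le (by linarith) h3.le
  have hp0 : 0 ≤ max (r - t) 0 := le_max_right _ _
  unfold cutoff cutoffDeriv
  set p := max (r - t) 0
  have : (1 - t) * (-(-((n+1) * p ^ n / (1 - t)) + p ^ (n+1) / (1 - t)^2))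
    = ((n+1) * p^n * (1-t) - p^(n+1)) / (1-t) := by field_simp; ring
  rw [this]
  gcongr
  have hn' : (1:ℝ) ≤ n := by exact_mod_cast hn
  have : p^(n+1) ≤ p^n * (1-t) := by rw [pow_succ]; gcongr
  have h4 : 0 ≤ p^n * (1-t) := by positivity
  nlinarith

theorem cutoffDeriv_bound {n : ℕ} (hn : 1 ≤ n) {r t : ℝ} (hr : r < 1) (ht0 : 0 ≤ t) (ht : t < 1) :
    -cutoffDeriv n r t ≤ n + 1 := by
  have h3 : 0 < (1 - t) := by linarith
  have hp : max (r - t) 0 ≤ 1 - t := max_le (by linarith) h3.le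
  have hp0 : 0 ≤ max (r - t) 0 := le_max_right _ _
  unfold cutoffDeriv
  set p := max (r - t) 0
  have h5 : 0 ≤ p ^ (n+1) / (1 - t)^2 := by positivity
  have h6 : (n+1) * p ^ n / (1 - t) ≤ n + 1 := by
    rw [div_le_iff₀ h3]
    gcongr
    calc p^n ≤ p^1 := pow_le_pow_of_le_one hp0 (by linarith) hn
      _ ≤ 1 - t := by simpa using hp
  linarith

theorem continuousOn_cutoff (n : ℕ) (r : ℝ) : ContinuousOn (cutoff n r) (Set.Iio 1) := by
  unfold cutoff
  refine ContinuousOn.div (by fun_prop) (by fun_prop) fun t ht => ?_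
  have : t < 1 := ht
  linarith

theorem continuousOn_cutoffDeriv (n : ℕ) (r : ℝ) :
    ContinuousOn (cutoffDeriv n r) (Set.Iio 1) := by
  unfold cutoffDeriv
  have : ∀ t ∈ Set.Iio (1:ℝ), 1 - t ≠ 0 := fun t ht => by
    have : t < 1 := ht
    linarith
  refine ContinuousOn.add (ContinuousOn.neg (ContinuousOn.div (by fun_prop) (by fun_prop) this))
    (ContinuousOn.div (by fun_prop) (by fun_prop) fun t ht => pow_ne_zero _ (this t ht))

/-! ### Wirtinger derivatives and the integral of a `∂̄`-derivative -/

/-- The real-linear map `v ↦ p v + q v̄`; as a differential it has Wirtinger derivatives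
`∂/∂z = p` and `∂/∂z̄ = q`. -/
noncomputable def wirt (p q : ℂ) : ℂ →L[ℝ] ℂ :=
  p • (ContinuousLinearMap.id ℝ ℂ) + q • (Complex.conjCLE : ℂ →L[ℝ] ℂ)

theorem wirt_apply (p q v : ℂ) : wirt p q v = p * v + q * (starRingEnd ℂ) v := by
  simp [wirt]

/-- Cauchy–Riemann: a holomorphic function has no `z̄`-derivative. -/
theorem wirt_holo {g : ℂ → ℂ} {g' z : ℂ} (h : HasDerivAt g g' z) :
    HasFDerivAt g (wirt g' 0) z := by
  refine (h.hasFDerivAt.restrictScalars ℝ).congr_fderiv ?_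
  ext v
  simp [wirt_apply, mul_comm]

theorem wirt_conj {g : ℂ → ℂ} {p q z : ℂ} (h : HasFDerivAt g (wirt p q) z) :
    HasFDerivAt (fun z => (starRingEnd ℂ) (g z))
      (wirt ((starRingEnd ℂ) q) ((starRingEnd ℂ) p)) z := by
  refine ((Complex.conjCLE : ℂ →L[ℝ] ℂ).hasFDerivAt.comp z h).congr_fderiv ?_
  ext v
  simp [wirt_apply]
  ring

theorem wirt_mul {f g : ℂ → ℂ} {p q p' q' z : ℂ} (hf : HasFDerivAt f (wirt p q) z)
    (hg : HasFDerivAt g (wirt p' q') z) :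
    HasFDerivAt (fun z => f z * g z) (wirt (p * g z + f z * p') (q * g z + f z * q')) z := by
  refine (hf.mul hg).congr_fderiv ?_
  ext v
  simp [wirt_apply]
  ring

theorem wirt_sub {f g : ℂ → ℂ} {p q p' q' z : ℂ} (hf : HasFDerivAt f (wirt p q) z)
    (hg : HasFDerivAt g (wirt p' q') z) :
    HasFDerivAt (fun z => f z - g z) (wirt (p - p') (q - q')) z := by
  refine (hf.sub hg).congr_fderiv ?_
  ext v
  simp [wirt_apply]
  ring

/-- `∂η(|z|²)/∂z = η' z̄` and `∂η(|z|²)/∂z̄ = η' z`. -/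
theorem wirt_radial {η : ℝ → ℝ} {η' : ℝ} {z : ℂ} (h : HasDerivAt η η' (‖z‖^2)) :
    HasFDerivAt (fun z : ℂ => ((η (‖z‖^2) : ℝ) : ℂ)) (wirt (η' * (starRingEnd ℂ) z) (η' * z)) z := by
  have h1 := (hasStrictFDerivAt_norm_sq z).hasFDerivAt
  have h2 := h.hasFDerivAt.comp z h1
  refine ((Complex.ofRealCLM).hasFDerivAt.comp z h2).congr_fderiv ?_
  ext v
  apply Complex.ext <;> simp [wirt_apply] <;> ring

/-- The `∂̄`-derivative of a compactly supported `C¹` function has integral zero; here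
`I * F' z 1 - F' z I` is `2i ∂F/∂z̄`. -/
theorem integral_dbar {F : ℂ → ℂ} {F' : ℂ → ℂ →L[ℝ] ℂ} (hc : HasCompactSupport F)
    (hF : ∀ z, HasFDerivAt F (F' z) z) (hF' : Continuous F') :
    Integrable (fun z => I * F' z 1 - F' z I) ∧ ∫ z, (I * F' z 1 - F' z I) = 0 := by
  have e : F' = fderiv ℝ F := funext fun z => (hF z).fderiv.symm
  have hc' : HasCompactSupport F' := e ▸ hc.fderiv ℝ
  have key : ∀ v : ℂ, Integrable (fun z => F' z v) ∧ ∫ z, F' z v = 0 := by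
    intro v
    have i1 : Integrable (fun z => F' z v) :=
      (hF'.clm_apply continuous_const).integrable_of_hasCompactSupport
        (hc'.comp_left (g := fun L : ℂ →L[ℝ] ℂ => L v) (by simp))
    refine ⟨i1, ?_⟩
    have cF : Continuous F := continuous_iff_continuousAt.2 fun z => (hF z).continuousAt
    have := integral_mul_fderiv_eq_neg_fderiv_mul_of_integrable (μ := (volume : Measure ℂ))
      (f := fun _ : ℂ => (1:ℂ)) (g := F) (v := v) (by simp) (by simpa [← e] using i1)
      (by simpa using cF.integrable_of_hasCompactSupport hc) (fun _ _ => by fun_prop)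
      (fun z _ => (hF z).differentiableAt)
    simpa [← e] using this
  refine ⟨((key 1).1.const_mul I).sub (key I).1, ?_⟩
  rw [integral_sub ((key 1).1.const_mul I) (key I).1, integral_const_mul, (key 1).2, (key I).2]
  simp

/-! ### The Hardy inequality for a point mass -/

/-- Lower bound for the real part of `∂/∂z̄ [η |g|² (1/(z - ζ) - z̄)]` at a point, with `a = g z`,
`b = g' z`, and `η`, `η'` the values of the cutoff and its derivative at `|z|²`. -/
theorem pointwise_bound {z ζ a b : ℂ} (hz : ‖z‖ < 1) (hζ : ‖ζ‖ = 1) {η η' K : ℝ} (hη : 0 ≤ η)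
    (h1 : η ≤ (1 - ‖z‖^2) * (-η')) (hK : 4 * (‖a‖^2 * -η' * (3/2 - 2 * ‖z‖^2)) ≤ K) :
    ‖a‖^2 * η / ‖z - ζ‖^2 ≤ K + 144 * (‖b‖^2 * η / ‖z - ζ‖^2) +
      4 * (η' * z * (a * (starRingEnd ℂ) a * ((z - ζ)⁻¹ - (starRingEnd ℂ) z)) +
        η * (a * (starRingEnd ℂ) b * ((z - ζ)⁻¹ - (starRingEnd ℂ) z)
          + a * (starRingEnd ℂ) a * (-1))).re := by
  have hne : z - ζ ≠ 0 := fun h => by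
    rw [sub_eq_zero.1 h] at hz; linarith
  have hd0 : 0 < ‖z - ζ‖ := norm_pos_iff.2 hne
  have hd2 : ‖z - ζ‖ ≤ 2 := (norm_sub_le _ _).trans (by linarith)
  set c := (z - ζ)⁻¹ - (starRingEnd ℂ) z with hc
  have ht0 := norm_nonneg z
  -- Both `1/|z - ζ|` and `|z|` are at most a multiple of `1/|z - ζ|²`, as `|z - ζ| ≤ 2`.
  have hcn : ‖c‖ ≤ 6 / ‖z - ζ‖^2 := by
    have : ‖c‖ ≤ ‖z - ζ‖⁻¹ + 1 := by
      refine (norm_sub_le _ _).trans ?_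
      rw [norm_inv, RCLike.norm_conj]; linarith
    refine this.trans ?_
    rw [le_div_iff₀ (by positivity)]
    have : (‖z - ζ‖⁻¹ + 1) * ‖z - ζ‖^2 = ‖z - ζ‖ + ‖z - ζ‖^2 := by field_simp
    rw [this]; nlinarith
  have hzc : (z * c).re = 1/2 - (1 - ‖z‖^2) / (2 * ‖z - ζ‖^2) - ‖z‖^2 := by
    have e1 : (z * (z - ζ)⁻¹).re = (z * (starRingEnd ℂ) (z - ζ)).re / ‖z - ζ‖^2 := by
      rw [Complex.inv_def, ← Complex.normSq_eq_norm_sq, ← mul_assoc, Complex.re_mul_ofReal]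
      rfl
    have e2 : (z * (starRingEnd ℂ) (z - ζ)).re = (‖z‖^2 - 1 + ‖z - ζ‖^2) / 2 := by
      have hs : ‖ζ‖^2 = 1 := by rw [hζ]; norm_num
      rw [← Complex.normSq_eq_norm_sq, Complex.normSq_apply] at hs ⊢
      rw [← Complex.normSq_eq_norm_sq, Complex.normSq_apply]
      simp
      linarith
    rw [hc, mul_sub, Complex.sub_re, e1, e2, Complex.mul_conj, Complex.normSq_eq_norm_sq,
      Complex.ofReal_re]
    field_simp
    ring
  have hq : (η' * z * (a * (starRingEnd ℂ) a * c) +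
        η * (a * (starRingEnd ℂ) b * c + a * (starRingEnd ℂ) a * (-1))).re
      = ‖a‖^2 * η' * (z * c).re + η * (a * (starRingEnd ℂ) b * c).re - η * ‖a‖^2 := by
    have : (η' * z * (a * (starRingEnd ℂ) a * c) +
        η * (a * (starRingEnd ℂ) b * c + a * (starRingEnd ℂ) a * (-1)) : ℂ)
      = ((‖a‖^2 * η' : ℝ) : ℂ) * (z * c) + (η : ℂ) * (a * (starRingEnd ℂ) b * c)
        - ((η * ‖a‖^2 : ℝ) : ℂ) := by
      rw [Complex.mul_conj, Complex.normSq_eq_norm_sq]; push_cast; ring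
    rw [this, Complex.sub_re, Complex.add_re, Complex.re_ofReal_mul, Complex.re_ofReal_mul,
      Complex.ofReal_re]
  have hcross : -(‖a‖ * ‖b‖ * (6 / ‖z - ζ‖^2)) ≤ (a * (starRingEnd ℂ) b * c).re := by
    have h := Complex.abs_re_le_norm (a * (starRingEnd ℂ) b * c)
    rw [norm_mul, norm_mul, RCLike.norm_conj] at h
    have : ‖a‖ * ‖b‖ * ‖c‖ ≤ ‖a‖ * ‖b‖ * (6 / ‖z - ζ‖^2) := by gcongr
    have := (abs_le.1 (h.trans this)).1
    exact this
  rw [hq, hzc]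
  set d := ‖z - ζ‖^2
  have hd : 0 < d := by positivity
  set u := ‖a‖^2
  have hu : 0 ≤ u := by positivity
  -- Cross term: `24 x y ≤ x² + 144 y²` with `x = |a|`, `y = |b|`.
  have hcross2 : -(u * η / d + 144 * (‖b‖^2 * η / d)) ≤ 4 * (η * (a * (starRingEnd ℂ) b * c).re) := by
    have e1 : η * -(‖a‖ * ‖b‖ * (6 / d)) ≤ η * (a * (starRingEnd ℂ) b * c).re := by gcongr
    have e2 : 0 ≤ η / d * (‖a‖ - 12 * ‖b‖)^2 := by positivity
    have e3 : η / d * (‖a‖ - 12 * ‖b‖)^2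
      = u * η / d + 144 * (‖b‖^2 * η / d) + 4 * (η * -(‖a‖ * ‖b‖ * (6 / d))) := by
      simp only [u]; field_simp; ring
    linarith
  have hmain : 2 * (u * η / d) ≤ 2 * (u * ((1 - ‖z‖^2) * (-η')) / d) := by gcongr
  have hη2 : u * η ≤ u * ((1 - ‖z‖^2) * (-η')) := by gcongr
  have e4 : 4 * (u * η' * (1/2 - (1 - ‖z‖^2) / (2 * d) - ‖z‖^2))
      = 2 * (u * ((1 - ‖z‖^2) * (-η')) / d) + 4 * (u * -η' * (‖z‖^2 - 1/2)) := by
    field_simp; ring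
  nlinarith

/-- Green's formula for `F = η(|z|²) |g|² (1/(z - ζ) - z̄)`; the function `q` is `∂F/∂z̄`. The
arbitrary values of `g` outside the disc do not matter because `η` and its derivative vanish
there. -/
theorem integral_dbar_cutoff_eq_zero (n : ℕ) (hn : 1 ≤ n) {r : ℝ} (hr : r < 1) {ζ : ℂ}
    (hζ : ‖ζ‖ = 1) {g : ℂ → ℂ} (hg : DifferentiableOn ℂ g (ball 0 1)) {q : ℂ → ℂ}
    (hq : q = fun z : ℂ =>
      (cutoffDeriv n r (‖z‖^2) : ℂ) * z * (g z * (starRingEnd ℂ) (g z) *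
        ((z - ζ)⁻¹ - (starRingEnd ℂ) z)) +
      (cutoff n r (‖z‖^2) : ℂ) * (g z * (starRingEnd ℂ) (deriv g z) *
        ((z - ζ)⁻¹ - (starRingEnd ℂ) z) + g z * (starRingEnd ℂ) (g z) * (-1))) :
    Integrable q ∧ ∫ z, q z = 0 := by
  set F : ℂ → ℂ := fun z => (cutoff n r (‖z‖^2) : ℂ) * (g z * (starRingEnd ℂ) (g z) *
        ((z - ζ)⁻¹ - (starRingEnd ℂ) z)) with hF
  set p : ℂ → ℂ := fun z =>
      (cutoffDeriv n r (‖z‖^2) : ℂ) * (starRingEnd ℂ) z * (g z * (starRingEnd ℂ) (g z) *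
        ((z - ζ)⁻¹ - (starRingEnd ℂ) z)) +
      (cutoff n r (‖z‖^2) : ℂ) * (deriv g z * (starRingEnd ℂ) (g z) *
        ((z - ζ)⁻¹ - (starRingEnd ℂ) z) + g z * (starRingEnd ℂ) (g z) * (-((z - ζ)^2)⁻¹)) with hp
  have hsq : ∀ z : ℂ, ‖z‖ < 1 → ‖z‖^2 < 1 := fun z hz => by
    have := norm_nonneg z; nlinarith
  -- Near points outside the open disc the cutoff vanishes identically, since `r < 1`.
  have hnear : ∀ z : ℂ, ¬ ‖z‖ < 1 → ∀ᶠ w in nhds z, r < ‖w‖^2 := by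
    intro z hz
    have : r < ‖z‖^2 := by
      have : 1 ≤ ‖z‖ := not_lt.1 hz
      nlinarith
    exact (continuous_norm.pow 2).continuousAt.eventually (lt_mem_nhds this)
  have hne : ∀ z : ℂ, ‖z‖ < 1 → z - ζ ≠ 0 := fun z hz h => by
    rw [sub_eq_zero.1 h] at hz; linarith
  have hopen : IsOpen (ball (0:ℂ) 1) := isOpen_ball
  have hmem : ∀ z : ℂ, ‖z‖ < 1 → ball (0:ℂ) 1 ∈ nhds z := fun z hz =>
    hopen.mem_nhds (by simpa using hz)
  have hder : ∀ z, HasFDerivAt F (wirt (p z) (q z)) z := by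
    intro z
    by_cases hz : ‖z‖ < 1
    · have hgz : HasDerivAt g (deriv g z) z := (hg.differentiableAt (hmem z hz)).hasDerivAt
      have w1 := wirt_holo hgz
      have w2 := wirt_conj w1
      have w3 : HasFDerivAt (fun z : ℂ => (z - ζ)⁻¹) (wirt (-((z - ζ)^2)⁻¹) 0) z := by
        apply wirt_holo
        exact (((hasDerivAt_id z).sub_const ζ).inv (hne z hz)).congr_deriv (by simp [neg_div])
      have w4 : HasFDerivAt (fun z : ℂ => (starRingEnd ℂ) z) (wirt 0 1) z := by
        simpa using wirt_conj (wirt_holo (hasDerivAt_id z))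
      have w5 := wirt_mul (wirt_radial (cutoff_hasDerivAt n hn r _ (hsq z hz)))
        (wirt_mul (wirt_mul w1 w2) (wirt_sub w3 w4))
      convert w5 using 2
      · simp only [hp, map_zero]; ring
      · simp only [hq]; ring
    · have hz2 := hnear z hz
      have e0 := hz2.self_of_nhds
      have ep : p z = 0 := by
        simp only [hp, cutoff_of_le e0.le, cutoffDeriv_of_le hn e0.le]; simp
      have eq : q z = 0 := by
        simp only [hq, cutoff_of_le e0.le, cutoffDeriv_of_le hn e0.le]; simp
      have e1 : F =ᶠ[nhds z] fun _ => 0 := by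
        filter_upwards [hz2] with w hw
        simp [hF, cutoff_of_le hw.le]
      have : wirt (p z) (q z) = 0 := by rw [ep, eq]; ext v; simp [wirt_apply]
      rw [this]
      exact (hasFDerivAt_const (0:ℂ) z).congr_of_eventuallyEq e1
  have hcont : ∀ z, ContinuousAt p z ∧ ContinuousAt q z := by
    intro z
    by_cases hz : ‖z‖ < 1
    · have c1 : ContinuousAt g z := (hg.differentiableAt (hmem z hz)).continuousAt
      have c2 : ContinuousAt (deriv g) z :=
        ((hg.deriv hopen).differentiableAt (hmem z hz)).continuousAt
      have c3 : ContinuousAt (fun z : ℂ => (z - ζ)⁻¹) z :=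
        ContinuousAt.inv₀ (by fun_prop) (hne z hz)
      have c3' : ContinuousAt (fun z : ℂ => ((z - ζ)^2)⁻¹) z :=
        ContinuousAt.inv₀ (by fun_prop) (pow_ne_zero _ (hne z hz))
      have c4 : ContinuousAt (fun z : ℂ => (starRingEnd ℂ) z) z := Complex.continuous_conj.continuousAt
      have c5 : ContinuousAt (fun z : ℂ => (starRingEnd ℂ) (g z)) z :=
        Complex.continuous_conj.continuousAt.comp c1
      have c6 : ContinuousAt (fun z : ℂ => (starRingEnd ℂ) (deriv g z)) z :=
        Complex.continuous_conj.continuousAt.comp c2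
      have nn : ContinuousAt (fun z : ℂ => ‖z‖^2) z := by fun_prop
      have c7 : ContinuousAt (fun z : ℂ => (cutoff n r (‖z‖^2) : ℂ)) z :=
        Complex.continuous_ofReal.continuousAt.comp
          (ContinuousAt.comp (f := fun z : ℂ => ‖z‖^2)
            ((continuousOn_cutoff n r).continuousAt (Iio_mem_nhds (hsq z hz))) nn)
      have c8 : ContinuousAt (fun z : ℂ => (cutoffDeriv n r (‖z‖^2) : ℂ)) z :=
        Complex.continuous_ofReal.continuousAt.comp
          (ContinuousAt.comp (f := fun z : ℂ => ‖z‖^2)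
            ((continuousOn_cutoffDeriv n r).continuousAt (Iio_mem_nhds (hsq z hz))) nn)
      have c9 : ContinuousAt (fun z : ℂ => z) z := continuousAt_id
      refine ⟨?_, ?_⟩
      · exact ((c8.mul c4).mul ((c1.mul c5).mul (c3.sub c4))).add
          (c7.mul (((c2.mul c5).mul (c3.sub c4)).add ((c1.mul c5).mul c3'.neg)))
      · rw [hq]
        exact ((c8.mul c9).mul ((c1.mul c5).mul (c3.sub c4))).add
          (c7.mul (((c1.mul c6).mul (c3.sub c4)).add ((c1.mul c5).mul continuousAt_const)))
    · have hz2 := hnear z hz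
      constructor
      · refine (continuousAt_const (y := (0:ℂ))).congr ?_
        filter_upwards [hz2] with w hw
        simp [hp, cutoff_of_le hw.le, cutoffDeriv_of_le hn hw.le]
      · refine (continuousAt_const (y := (0:ℂ))).congr ?_
        filter_upwards [hz2] with w hw
        simp [hq, cutoff_of_le hw.le, cutoffDeriv_of_le hn hw.le]
  have hp' : Continuous p := continuous_iff_continuousAt.2 fun z => (hcont z).1
  have hq' : Continuous q := continuous_iff_continuousAt.2 fun z => (hcont z).2
  have hsupp : HasCompactSupport F := by
    refine HasCompactSupport.intro (isCompact_closedBall (0:ℂ) 1) fun z hz => ?_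
    have : ¬ ‖z‖ < 1 := fun h => hz (by simpa using h.le)
    simp [hF, cutoff_of_le (hnear z this).self_of_nhds.le]
  have := integral_dbar hsupp hder (by unfold wirt; fun_prop)
  have e : (fun z => I * wirt (p z) (q z) 1 - wirt (p z) (q z) I) = fun z => (2 * I) * q z := by
    funext z
    simp only [wirt_apply, map_one, Complex.conj_I]; ring
  rw [e, integral_const_mul] at this
  have h2I : (2 * I : ℂ) ≠ 0 := by simp
  refine ⟨(integrable_const_mul_iff (isUnit_iff_ne_zero.2 h2I) _).1 this.1, ?_⟩
  exact (mul_eq_zero.1 this.2).resolve_left h2I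

/-- The Hardy inequality for a point mass at `ζ`, with the weight on the left truncated by the
cutoff. The constants depend neither on `r` nor on `ζ`. -/
theorem cutoff_estimate (n : ℕ) (hn : 1 ≤ n) {r : ℝ} (hr : r < 1) {ζ : ℂ}
    (hζ : ‖ζ‖ = 1) {g : ℂ → ℂ} (hg : DifferentiableOn ℂ g (ball 0 1)) {K : ℝ} (hK0 : 0 ≤ K)
    (hK : ∀ z : ℂ, ‖z‖^2 ≤ 3/4 → ‖g z‖^2 ≤ K) :
    ∫⁻ z in ball (0:ℂ) 1, ENNReal.ofReal (‖g z‖^2 * cutoff n r (‖z‖^2) / ‖z - ζ‖^2) ≤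
      ENNReal.ofReal (6 * (n + 1) * K) * volume (ball (0:ℂ) 1) +
      144 * ∫⁻ z in ball (0:ℂ) 1,
        ENNReal.ofReal (‖deriv g z‖^2 * (1 - ‖z‖^2)^n / ‖z - ζ‖^2) := by
  obtain ⟨qi, q0⟩ := integral_dbar_cutoff_eq_zero n hn hr hζ hg rfl
  set q : ℂ → ℂ := fun z : ℂ =>
      (cutoffDeriv n r (‖z‖^2) : ℂ) * z * (g z * (starRingEnd ℂ) (g z) *
        ((z - ζ)⁻¹ - (starRingEnd ℂ) z)) +
      (cutoff n r (‖z‖^2) : ℂ) * (g z * (starRingEnd ℂ) (deriv g z) *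
        ((z - ζ)⁻¹ - (starRingEnd ℂ) z) + g z * (starRingEnd ℂ) (g z) * (-1)) with hq
  set S := closedBall (0:ℂ) (√r) with hS
  have hsq : ∀ z : ℂ, ‖z‖ < 1 → ‖z‖^2 < 1 := fun z hz => by
    have := norm_nonneg z; nlinarith
  have hSn : ∀ z : ℂ, z ∉ S → r ≤ ‖z‖^2 := by
    intro z hz
    have : √r < ‖z‖ := by simpa [hS] using hz
    exact (Real.sqrt_le_left (norm_nonneg z)).1 this.le
  have hS1 : ∀ z ∈ S, ‖z‖ < 1 := by
    intro z hz
    have h1 : ‖z‖ ≤ √r := by simpa [hS] using hz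
    have h2 : √r < 1 := by rw [Real.sqrt_lt' one_pos]; simpa using hr
    linarith
  have hSball : S ⊆ ball (0:ℂ) 1 := fun z hz => by simpa using hS1 z hz
  set A : ℂ → ℝ := fun z => ‖g z‖^2 * cutoff n r (‖z‖^2) / ‖z - ζ‖^2 with hA
  set B : ℂ → ℝ := fun z => 6 * (n + 1) * K +
    144 * (‖deriv g z‖^2 * cutoff n r (‖z‖^2) / ‖z - ζ‖^2) with hB
  have hAB : ∀ z : ℂ, ‖z‖ < 1 → A z ≤ B z + 4 * (q z).re := by
    intro z hz
    have hz2 := hsq z hz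
    refine pointwise_bound hz hζ (cutoff_nonneg hz2) (cutoff_le_deriv hn hr hz2) ?_
    have b1 := cutoffDeriv_bound hn hr (sq_nonneg ‖z‖) hz2
    have b0 : 0 ≤ -cutoffDeriv n r (‖z‖^2) := by
      have := (cutoff_nonneg (n := n) (r := r) hz2).trans (cutoff_le_deriv hn hr hz2)
      exact nonneg_of_mul_nonneg_right this (by linarith)
    set e := -cutoffDeriv n r (‖z‖^2)
    -- The remaining term `3/2 - 2|z|²` is positive only for `|z|² < 3/4`, where `g` is bounded
    -- by assumption.
    rcases le_total (‖z‖^2) (3/4) with h | h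
    · have : ‖g z‖^2 * e * (3/2 - 2 * ‖z‖^2) ≤ K * (n+1) * (3/2) := by
        have := hK z h
        gcongr
        · linarith
        · linarith [sq_nonneg ‖z‖]
      linarith
    · have : ‖g z‖^2 * e * (3/2 - 2 * ‖z‖^2) ≤ 0 :=
        mul_nonpos_of_nonneg_of_nonpos (by positivity) (by linarith)
      have : 0 ≤ 6 * (n + 1) * K := by positivity
      linarith
  have cη : ContinuousOn (fun z : ℂ => cutoff n r (‖z‖^2)) S :=
    (continuousOn_cutoff n r).comp (by fun_prop) fun z hz => hsq z (hS1 z hz)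
  have cg : ContinuousOn g S := hg.continuousOn.mono hSball
  have cg' : ContinuousOn (deriv g) S := (hg.deriv isOpen_ball).continuousOn.mono hSball
  have cd : ContinuousOn (fun z : ℂ => ‖z - ζ‖^2) S := by fun_prop
  have hd : ∀ z ∈ S, ‖z - ζ‖^2 ≠ 0 := by
    intro z hz h
    have h1 : z - ζ = 0 := by simpa using h
    have := hS1 z hz
    rw [sub_eq_zero.1 h1] at this; linarith
  have hcS : IsCompact S := isCompact_closedBall _ _
  have iA : IntegrableOn A S :=
    ContinuousOn.integrableOn_compact hcS (((cg.norm.pow 2).mul cη).div cd hd)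
  have iB : IntegrableOn B S :=
    ContinuousOn.integrableOn_compact hcS
      (continuousOn_const.add (continuousOn_const.mul (((cg'.norm.pow 2).mul cη).div cd hd)))
  have hqS : ∫ z in S, q z = 0 := by
    rw [setIntegral_eq_integral_of_forall_compl_eq_zero, q0]
    intro z hz
    simp [hq, cutoff_of_le (hSn z hz), cutoffDeriv_of_le hn (hSn z hz)]
  have iqr : IntegrableOn (fun z => (q z).re) S := qi.integrableOn.re
  have hqr : ∫ z in S, (q z).re = 0 := by
    have := integral_re (𝕜 := ℂ) (μ := volume.restrict S) (f := q) qi.integrableOn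
    rw [hqS, map_zero] at this
    exact this
  have hle : ∫ z in S, A z ≤ ∫ z in S, B z := by
    calc ∫ z in S, A z ≤ ∫ z in S, (B z + 4 * (q z).re) :=
          setIntegral_mono_on iA (iB.add (iqr.const_mul 4)) measurableSet_closedBall
            fun z hz => hAB z (hS1 z hz)
      _ = ∫ z in S, B z := by
          rw [integral_add iB (iqr.const_mul 4), integral_const_mul, hqr]; simp
  have A0 : ∀ z ∈ S, 0 ≤ A z := fun z hz =>
    div_nonneg (mul_nonneg (sq_nonneg _) (cutoff_nonneg (hsq z (hS1 z hz)))) (sq_nonneg _)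
  have B0 : ∀ z ∈ S, 0 ≤ B z := fun z hz => by
    have := div_nonneg (mul_nonneg (sq_nonneg ‖deriv g z‖)
      (cutoff_nonneg (n := n) (r := r) (hsq z (hS1 z hz)))) (sq_nonneg ‖z - ζ‖)
    simp only [hB]
    positivity
  have hleS : ∫⁻ z in S, ENNReal.ofReal (A z) ≤ ∫⁻ z in S, ENNReal.ofReal (B z) := by
    rw [← ofReal_integral_eq_lintegral_ofReal iA, ← ofReal_integral_eq_lintegral_ofReal iB]
    · exact ENNReal.ofReal_le_ofReal hle
    · exact (ae_restrict_iff' measurableSet_closedBall).2 (Filter.Eventually.of_forall B0)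
    · exact (ae_restrict_iff' measurableSet_closedBall).2 (Filter.Eventually.of_forall A0)
  have hmeas : MeasurableSet S := measurableSet_closedBall
  calc ∫⁻ z in ball (0:ℂ) 1, ENNReal.ofReal (A z)
      ≤ ∫⁻ z in ball (0:ℂ) 1, S.indicator (fun z => ENNReal.ofReal (A z)) z := by
        refine lintegral_mono fun z => ?_
        by_cases hz : z ∈ S
        · simp [hz]
        · simp [hz, hA, cutoff_of_le (hSn z hz)]
    _ ≤ ∫⁻ z, S.indicator (fun z => ENNReal.ofReal (A z)) z :=
        lintegral_mono' Measure.restrict_le_self le_rfl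
    _ = ∫⁻ z in S, ENNReal.ofReal (A z) := lintegral_indicator hmeas _
    _ ≤ ∫⁻ z in S, ENNReal.ofReal (B z) := hleS
    _ ≤ ∫⁻ z in S, (ENNReal.ofReal (6 * (n + 1) * K) + 144 *
          ENNReal.ofReal (‖deriv g z‖^2 * (1 - ‖z‖^2)^n / ‖z - ζ‖^2)) := by
        refine setLIntegral_mono' hmeas fun z hz => ?_
        refine ENNReal.ofReal_add_le.trans ?_
        rw [ENNReal.ofReal_mul (by norm_num : (0:ℝ) ≤ 144)]
        have : ENNReal.ofReal 144 = 144 := by simp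
        rw [this]
        gcongr
        exact cutoff_le hr (hsq z (hS1 z hz))
    _ ≤ ∫⁻ z in ball (0:ℂ) 1, (ENNReal.ofReal (6 * (n + 1) * K) + 144 *
          ENNReal.ofReal (‖deriv g z‖^2 * (1 - ‖z‖^2)^n / ‖z - ζ‖^2)) :=
        lintegral_mono_set hSball
    _ = _ := by
        rw [lintegral_add_left measurable_const, lintegral_const_mul' _ _ (by simp)]
        simp

/-- The Hardy inequality for a unit point mass at `ζ`, with constants uniform in `ζ`. -/
theorem point_estimate (n : ℕ) (hn : 1 ≤ n) {ζ : ℂ}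
    (hζ : ‖ζ‖ = 1) {g : ℂ → ℂ} (hg : DifferentiableOn ℂ g (ball 0 1)) {K : ℝ} (hK0 : 0 ≤ K)
    (hK : ∀ z : ℂ, ‖z‖^2 ≤ 3/4 → ‖g z‖^2 ≤ K) :
    ∫⁻ z in ball (0:ℂ) 1, ENNReal.ofReal (‖g z‖^2 * (1 - ‖z‖^2)^n / ‖z - ζ‖^2) ≤
      ENNReal.ofReal (6 * (n + 1) * K) * volume (ball (0:ℂ) 1) +
      144 * ∫⁻ z in ball (0:ℂ) 1,
        ENNReal.ofReal (‖deriv g z‖^2 * (1 - ‖z‖^2)^n / ‖z - ζ‖^2) := by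
  set R : ℕ → ℝ := fun k => 1 - 1 / ((k:ℝ) + 1) with hR
  have hR1 : ∀ k, R k < 1 := fun k => by simp only [hR]; linarith [Nat.one_div_pos_of_nat (α := ℝ) (n := k)]
  have hRl : Filter.Tendsto R Filter.atTop (nhds 1) := by
    simpa [hR] using (tendsto_one_div_add_atTop_nhds_zero_nat (𝕜 := ℝ)).const_sub 1
  have hgm : AEMeasurable g (volume.restrict (ball (0:ℂ) 1)) :=
    hg.continuousOn.aemeasurable measurableSet_ball
  have hlim : ∀ z ∈ ball (0:ℂ) 1, Filter.Tendsto
      (fun k => ENNReal.ofReal (‖g z‖^2 * cutoff n (R k) (‖z‖^2) / ‖z - ζ‖^2)) Filter.atTop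
      (nhds (ENNReal.ofReal (‖g z‖^2 * (1 - ‖z‖^2)^n / ‖z - ζ‖^2))) := by
    intro z hz
    have hz1 : ‖z‖ < 1 := by simpa using hz
    have h1 : 0 < 1 - ‖z‖^2 := by have := norm_nonneg z; nlinarith
    refine ENNReal.tendsto_ofReal ((Filter.Tendsto.const_mul _ ?_).div_const _)
    have h2 : Filter.Tendsto (fun k => max (R k - ‖z‖^2) 0 ^ (n+1) / (1 - ‖z‖^2)) Filter.atTop
        (nhds (max (1 - ‖z‖^2) 0 ^ (n+1) / (1 - ‖z‖^2))) :=
      (((hRl.sub_const _).max tendsto_const_nhds).pow _).div_const _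
    have h3 : max (1 - ‖z‖^2) 0 ^ (n+1) / (1 - ‖z‖^2) = (1 - ‖z‖^2)^n := by
      rw [max_eq_left h1.le, pow_succ, mul_div_assoc, div_self h1.ne', mul_one]
    rw [h3] at h2
    exact h2
  have hfatou := lintegral_liminf_le' (μ := volume.restrict (ball (0:ℂ) 1)) (u := Filter.atTop)
    (f := fun k z => ENNReal.ofReal (‖g z‖^2 * cutoff n (R k) (‖z‖^2) / ‖z - ζ‖^2)) (by
      intro k
      unfold cutoff
      fun_prop)
  have hcongr : ∫⁻ z in ball (0:ℂ) 1, ENNReal.ofReal (‖g z‖^2 * (1 - ‖z‖^2)^n / ‖z - ζ‖^2) =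
      ∫⁻ z in ball (0:ℂ) 1, Filter.liminf (fun k =>
        ENNReal.ofReal (‖g z‖^2 * cutoff n (R k) (‖z‖^2) / ‖z - ζ‖^2)) Filter.atTop :=
    setLIntegral_congr_fun measurableSet_ball fun z hz => (hlim z hz).liminf_eq.symm
  rw [hcongr]
  refine hfatou.trans ?_
  refine (Filter.liminf_le_liminf (Filter.Eventually.of_forall fun k =>
    cutoff_estimate n hn (hR1 k) hζ hg hK0 hK)).trans ?_
  rw [Filter.liminf_const]

/-! ### Averaging over the measure -/

/-- The weighted integral for `μ` is the `μ`-average of those for point masses. -/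
theorem tonelli (n : ℕ) (hn : 1 ≤ n) (μ : Measure ℂ) [IsFiniteMeasure μ] {h : ℂ → ℂ}
    (hh : AEMeasurable h (volume.restrict (ball (0:ℂ) 1))) :
    ∫⁻ z in ball (0:ℂ) 1, (‖h z‖₊ : ℝ≥0∞) ^ 2 * Pmu μ z * ENNReal.ofReal ((1 - ‖z‖^2)^(n-1)) =
    ∫⁻ ζ, ∫⁻ z in ball (0:ℂ) 1,
      ENNReal.ofReal (‖h z‖^2 * (1 - ‖z‖^2)^n / ‖z - ζ‖^2) ∂volume ∂μ := by
  rw [← lintegral_lintegral_swap]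
  · refine setLIntegral_congr_fun measurableSet_ball fun z hz => ?_
    have hz1 : ‖z‖ < 1 := by simpa using hz
    have h1 : 0 < 1 - ‖z‖^2 := by have := norm_nonneg z; nlinarith
    have e : (‖h z‖₊ : ℝ≥0∞) ^ 2 = ENNReal.ofReal (‖h z‖^2) := by
      rw [ENNReal.ofReal_pow (norm_nonneg _), ofReal_norm]; rfl
    rw [e, Pmu, ← lintegral_const_mul' _ _ ENNReal.ofReal_ne_top,
      ← lintegral_mul_const' _ _ ENNReal.ofReal_ne_top]
    refine lintegral_congr fun ζ => ?_
    rw [← ENNReal.ofReal_mul (by positivity), ← ENNReal.ofReal_mul (by positivity)]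
    congr 1
    obtain ⟨m, rfl⟩ : ∃ m, n = m + 1 := ⟨n - 1, by omega⟩
    simp only [Nat.add_sub_cancel]
    ring
  · have h1 : AEMeasurable (fun x : ℂ × ℂ => h x.1) ((volume.restrict (ball (0:ℂ) 1)).prod μ) :=
      hh.comp_fst
    unfold Function.uncurry
    fun_prop

/-- Hardy inequality in qualitative form: square integrability of `g'` against
`P_μ (1 - |z|²)ⁿ⁻¹` passes to `g`. -/
theorem weighted_step (n : ℕ) (hn : 1 ≤ n) (μ : Measure ℂ) [IsFiniteMeasure μ]
    (hμ : μ (sphere (0:ℂ) 1)ᶜ = 0) {g : ℂ → ℂ} (hg : DifferentiableOn ℂ g (ball 0 1))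
    (hfin : ∫⁻ z in ball (0:ℂ) 1, (‖deriv g z‖₊ : ℝ≥0∞) ^ 2 * Pmu μ z *
      ENNReal.ofReal ((1 - ‖z‖^2)^(n-1)) < ⊤) :
    ∫⁻ z in ball (0:ℂ) 1, (‖g z‖₊ : ℝ≥0∞) ^ 2 * Pmu μ z *
      ENNReal.ofReal ((1 - ‖z‖^2)^(n-1)) < ⊤ := by
  have hgm : AEMeasurable g (volume.restrict (ball (0:ℂ) 1)) :=
    hg.continuousOn.aemeasurable measurableSet_ball
  have hgm' : AEMeasurable (deriv g) (volume.restrict (ball (0:ℂ) 1)) :=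
    (hg.deriv isOpen_ball).continuousOn.aemeasurable measurableSet_ball
  rw [tonelli n hn μ hgm'] at hfin
  rw [tonelli n hn μ hgm]
  obtain ⟨C, hC⟩ := (isCompact_closedBall (0:ℂ) (√(3/4))).exists_bound_of_continuousOn
    (hg.continuousOn.mono fun z hz => by
      have h1 : ‖z‖ ≤ √(3/4) := by simpa using hz
      have h2 : √(3/4) < 1 := by rw [Real.sqrt_lt' one_pos]; norm_num
      have h3 : ‖z‖ < 1 := by linarith
      simpa using h3)
  have hK : ∀ z : ℂ, ‖z‖^2 ≤ 3/4 → ‖g z‖^2 ≤ C^2 := by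
    intro z hz
    have := hC z (by simpa using Real.le_sqrt_of_sq_le hz)
    gcongr
  have hae : ∀ᵐ ζ ∂μ, ‖ζ‖ = 1 := by
    rw [ae_iff]
    refine measure_mono_null (fun ζ h => ?_) hμ
    simpa using h
  have hle : ∫⁻ ζ, ∫⁻ z in ball (0:ℂ) 1,
      ENNReal.ofReal (‖g z‖^2 * (1 - ‖z‖^2)^n / ‖z - ζ‖^2) ∂volume ∂μ ≤
      ∫⁻ ζ, (ENNReal.ofReal (6 * (n + 1) * C^2) * volume (ball (0:ℂ) 1) +
      144 * ∫⁻ z in ball (0:ℂ) 1,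
        ENNReal.ofReal (‖deriv g z‖^2 * (1 - ‖z‖^2)^n / ‖z - ζ‖^2)) ∂μ :=
    lintegral_mono_ae (hae.mono fun ζ hζ => point_estimate n hn hζ hg (sq_nonneg C) hK)
  refine hle.trans_lt ?_
  rw [lintegral_add_left measurable_const, lintegral_const_mul' _ _ ENNReal.ofNat_ne_top,
    lintegral_const]
  refine ENNReal.add_lt_top.2 ⟨?_, ENNReal.mul_lt_top (by simp) hfin⟩
  exact ENNReal.mul_lt_top (ENNReal.mul_lt_top ENNReal.ofReal_lt_top measure_ball_lt_top)
    (measure_lt_top _ _)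

theorem bounded_of_deriv {h : ℂ → ℂ} (hh : DifferentiableOn ℂ h (ball 0 1))
    (hb : ∃ M, ∀ z ∈ ball (0:ℂ) 1, ‖deriv h z‖ ≤ M) :
    ∃ M, ∀ z ∈ ball (0:ℂ) 1, ‖h z‖ ≤ M := by
  obtain ⟨M, hM⟩ := hb
  refine ⟨M + ‖h 0‖, fun z hz => ?_⟩
  have h0 : (0:ℂ) ∈ ball (0:ℂ) 1 := by simp
  have h1 := Convex.norm_image_sub_le_of_norm_deriv_le
    (fun x hx => hh.differentiableAt (isOpen_ball.mem_nhds hx)) hM (convex_ball (0:ℂ) 1) h0 hz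
  have h2 : ‖z‖ < 1 := by simpa using hz
  have hM0 : 0 ≤ M := (norm_nonneg _).trans (hM 0 h0)
  have h3 : M * ‖z - 0‖ ≤ M := by rw [sub_zero]; nlinarith
  have h4 : ‖h z‖ ≤ ‖h z - h 0‖ + ‖h 0‖ := by simpa using norm_add_le (h z - h 0) (h 0)
  linarith

/-- The normalizing constants are positive and finite, so they do not affect finiteness. -/
theorem Dmu_lt_top_iff (n : ℕ) (μ : Measure ℂ) (f : ℂ → ℂ) :
    Dmu n μ f < ⊤ ↔ ∫⁻ z in ball (0:ℂ) 1, (‖iteratedDeriv n f z‖₊ : ℝ≥0∞) ^ 2 * Pmu μ z *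
      ENNReal.ofReal ((1 - ‖z‖^2)^(n-1)) < ⊤ := by
  have h1 : ENNReal.ofReal (1 / ((n.factorial : ℝ) * ((n-1).factorial : ℝ))) ≠ 0 := by
    rw [Ne, ENNReal.ofReal_eq_zero, not_le]
    have := n.factorial_pos
    have := (n-1).factorial_pos
    positivity
  have h2 : (ENNReal.ofReal Real.pi)⁻¹ ≠ 0 := by simp
  have h3 : (ENNReal.ofReal Real.pi)⁻¹ ≠ ⊤ := by simp [Real.pi_pos]
  rw [Dmu, nA, Measure.restrict_smul, lintegral_smul_measure, smul_eq_mul, ← mul_assoc]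
  have hc0 := mul_ne_zero h1 h2
  have hct := ENNReal.mul_ne_top (ENNReal.ofReal_ne_top
    (r := 1 / ((n.factorial : ℝ) * ((n-1).factorial : ℝ)))) h3
  constructor
  · intro h
    exact (ENNReal.lt_top_of_mul_ne_top_right h.ne hc0)
  · exact fun h => ENNReal.mul_lt_top hct.lt_top h

theorem measurable_Pmu (μ : Measure ℂ) [IsFiniteMeasure μ] : Measurable (Pmu μ) := by
  unfold Pmu
  exact Measurable.lintegral_prod_right' (f := fun x : ℂ × ℂ =>
    ENNReal.ofReal ((1 - ‖x.1‖^2) / ‖x.1 - x.2‖^2)) (by fun_prop)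

theorem stmt12 (n : ℕ) (hn : 1 ≤ n) (μ : Measure ℂ) [IsFiniteMeasure μ]
    (hμ : μ (sphere (0:ℂ) 1)ᶜ = 0)
    (φ : ℂ → ℂ) (hφ : DifferentiableOn ℂ φ (ball (0:ℂ) 1))
    (M : ℝ) (hM : ∀ z ∈ ball (0:ℂ) 1, ‖iteratedDeriv n φ z‖ ≤ M) :
    ∀ f : ℂ → ℂ, DifferentiableOn ℂ f (ball (0:ℂ) 1) → Dmu n μ f < ⊤ →
      Dmu n μ (fun z => φ z * f z) < ⊤ := by
  intro f hf hD
  rw [Dmu_lt_top_iff] at hD ⊢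
  have hW : ∀ j ≤ n, ∫⁻ z in ball (0:ℂ) 1, (‖iteratedDeriv j f z‖₊ : ℝ≥0∞) ^ 2 * Pmu μ z *
      ENNReal.ofReal ((1 - ‖z‖^2)^(n-1)) < ⊤ := by
    intro j hj
    induction hj using Nat.decreasingInduction with
    | self => exact hD
    | of_succ k hk ih =>
      rw [iteratedDeriv_succ] at ih
      exact weighted_step n hn μ hμ (differentiableOn_iteratedDeriv hf k) ih
  have hB : ∀ j ≤ n, ∃ M, ∀ z ∈ ball (0:ℂ) 1, ‖iteratedDeriv j φ z‖ ≤ M := by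
    intro j hj
    induction hj using Nat.decreasingInduction with
    | self => exact ⟨M, hM⟩
    | of_succ k hk ih =>
      rw [iteratedDeriv_succ] at ih
      exact bounded_of_deriv (differentiableOn_iteratedDeriv hφ k) ih
  have hB' : ∀ j, ∃ M, j ≤ n → ∀ z ∈ ball (0:ℂ) 1, ‖iteratedDeriv j φ z‖ ≤ M := by
    intro j
    by_cases hj : j ≤ n
    · obtain ⟨M, h⟩ := hB j hj
      exact ⟨M, fun _ => h⟩
    · exact ⟨0, fun h => absurd h hj⟩
  choose b hb using hB'
  set c : ℕ → ℝ := fun i => (n+1) * (n.choose i * b i)^2 with hc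
  have hpt : ∀ z ∈ ball (0:ℂ) 1, (‖iteratedDeriv n (fun z => φ z * f z) z‖₊ : ℝ≥0∞)^2 ≤
      ∑ i ∈ Finset.range (n+1),
        ENNReal.ofReal (c i) * (‖iteratedDeriv (n-i) f z‖₊ : ℝ≥0∞)^2 := by
    intro z hz
    have e : ∀ w : ℂ, (‖w‖₊ : ℝ≥0∞) ^ 2 = ENNReal.ofReal (‖w‖^2) := fun w => by
      rw [ENNReal.ofReal_pow (norm_nonneg _), ofReal_norm]; rfl
    have cφ : ContDiffAt ℂ n φ z :=
      (hφ.contDiffOn isOpen_ball).contDiffAt (isOpen_ball.mem_nhds hz)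
    have cf : ContDiffAt ℂ n f z :=
      (hf.contDiffOn isOpen_ball).contDiffAt (isOpen_ball.mem_nhds hz)
    rw [iteratedDeriv_fun_mul cφ cf]
    simp only [e]
    have h1 : ‖∑ i ∈ Finset.range (n + 1),
        (n.choose i : ℂ) * iteratedDeriv i φ z * iteratedDeriv (n - i) f z‖^2 ≤
        ∑ i ∈ Finset.range (n+1), c i * ‖iteratedDeriv (n-i) f z‖^2 := by
      calc _ ≤ (∑ i ∈ Finset.range (n + 1),
            ‖(n.choose i : ℂ) * iteratedDeriv i φ z * iteratedDeriv (n - i) f z‖)^2 := by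
            gcongr; exact norm_sum_le _ _
        _ ≤ (Finset.range (n+1)).card * ∑ i ∈ Finset.range (n + 1),
            ‖(n.choose i : ℂ) * iteratedDeriv i φ z * iteratedDeriv (n - i) f z‖^2 :=
            sq_sum_le_card_mul_sum_sq
        _ ≤ _ := by
            rw [Finset.mul_sum]
            refine Finset.sum_le_sum fun i hi => ?_
            have hbi := hb i (by simpa [Nat.lt_succ_iff] using hi) z hz
            simp only [hc, Finset.card_range, norm_mul, Complex.norm_natCast]
            push_cast
            rw [mul_pow (_ * _), mul_assoc]
            gcongr
    refine (ENNReal.ofReal_le_ofReal h1).trans ?_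
    rw [ENNReal.ofReal_sum_of_nonneg fun i _ => by positivity]
    refine Finset.sum_le_sum fun i _ => ?_
    rw [ENNReal.ofReal_mul (by positivity)]
  have hmeas : ∀ j, AEMeasurable (fun z => (‖iteratedDeriv j f z‖₊ : ℝ≥0∞) ^ 2 * Pmu μ z *
      ENNReal.ofReal ((1 - ‖z‖^2)^(n-1))) (volume.restrict (ball (0:ℂ) 1)) := by
    intro j
    have h1 : AEMeasurable (iteratedDeriv j f) (volume.restrict (ball (0:ℂ) 1)) :=
      (differentiableOn_iteratedDeriv hf j).continuousOn.aemeasurable measurableSet_ball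
    have h2 := measurable_Pmu μ
    fun_prop
  calc _ ≤ ∫⁻ z in ball (0:ℂ) 1, ∑ i ∈ Finset.range (n+1), ENNReal.ofReal (c i) *
        ((‖iteratedDeriv (n-i) f z‖₊ : ℝ≥0∞)^2 * Pmu μ z *
          ENNReal.ofReal ((1 - ‖z‖^2)^(n-1))) := by
        refine setLIntegral_mono' measurableSet_ball fun z hz => ?_
        have := hpt z hz
        calc _ ≤ (∑ i ∈ Finset.range (n+1), ENNReal.ofReal (c i) *
              (‖iteratedDeriv (n-i) f z‖₊ : ℝ≥0∞)^2) * Pmu μ z *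
              ENNReal.ofReal ((1 - ‖z‖^2)^(n-1)) := by gcongr
          _ = _ := by
            rw [Finset.sum_mul, Finset.sum_mul]
            simp only [mul_assoc]
    _ = ∑ i ∈ Finset.range (n+1), ENNReal.ofReal (c i) * ∫⁻ z in ball (0:ℂ) 1,
        ((‖iteratedDeriv (n-i) f z‖₊ : ℝ≥0∞)^2 * Pmu μ z *
          ENNReal.ofReal ((1 - ‖z‖^2)^(n-1))) := by
        rw [lintegral_finsetSum' _ fun i _ => (hmeas (n-i)).const_mul _]
        refine Finset.sum_congr rfl fun i _ => ?_
        rw [lintegral_const_mul' _ _ ENNReal.ofReal_ne_top]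
    _ < ⊤ := ENNReal.sum_lt_top.2 fun i _ =>
        ENNReal.mul_lt_top ENNReal.ofReal_lt_top (hW (n-i) (Nat.sub_le _ _))
end

section
/- Let μ be a finite positive Borel measure on 𝕋 and n a positive integer. Then for every w ∈ 𝔻, D_{μ,n}(1/(1-z w̄)) = (|w|^{2n}/(1-|w|²)^n) · V_μ(w), where V_μ(w) := ∫_𝕋 dμ(λ)/|1-λ w̄|². -/
/-!
By Tonelli, the integral defining `Dmu` can be computed for `μ` a point mass at a point `ζ` of the
unit circle. As `|∂ⁿ (1 - z w̄)⁻¹|² = n!² |w|²ⁿ / |1 - z w̄|²ⁿ⁺²`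
(`norm_iteratedDeriv_cauchy_sq`), what has to be evaluated is
`∫ P_ζ(z) (1 - |z|²)ⁿ⁻¹ / |1 - z w̄|²ⁿ⁺² dA(z)` over the unit disc, with `P_ζ` the Poisson kernel
(`lintegral_poisson_kernel_pow`).

Substitute `z = φ(u) = (w - u) / (1 - u w̄)`, an involutive automorphism of the disc. Each of
`1 - |φ(u)|²`, `1 - φ(u) w̄` and the Jacobian `|φ'(u)|²` is a constant times a power of
`|1 - u w̄|` (times `1 - |u|²` for the first), and these powers cancel exactly for the exponent
`2n + 2`. Moreover `P_ζ(φ(u))` is `P_ζ(w)` times the Poisson kernel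
`(1 - |u|²) / |1 - u η|²` at `u`, where `η = (1 - ζ w̄) / (w - ζ)` is unimodular. The remaining
integral is done in polar coordinates (`lintegral_poisson_disc`): the Poisson kernel has mean `1`
on each circle (`lintegral_poisson_circle`), and the radial factor integrates to `1 / (2n)`.
Finally `|w - ζ| = |1 - ζ w̄|` turns `P_ζ(w)` into the integrand of `Vmu`.
-/

open MeasureTheory Metric Complex
open scoped ENNReal NNReal

/-- `V_μ(w) = ∫_𝕋 dμ(λ)/|1-λ w̄|²`. -/
noncomputable def Vmu (μ : Measure ℂ) (w : ℂ) : ℝ≥0∞ :=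
  ∫⁻ lam, ENNReal.ofReal (1 / ‖1 - lam * (starRingEnd ℂ) w‖^2) ∂μ

/-- The Poisson kernel has mean `1` on each circle of radius `r < 1`. On that circle
`|1 - r e^{iθ} η| = |e^{iθ} - r η̄|`, so this is the Poisson integral formula on the unit circle
for the constant function `1` at the point `r η̄`. -/
lemma lintegral_poisson_circle {η : ℂ} (hη : ‖η‖ = 1) {r : ℝ} (hr0 : 0 ≤ r) (hr1 : r < 1) :
    ∫⁻ θ in Set.Ioo (-Real.pi) Real.pi, ENNReal.ofReal
      ((1 - r ^ 2) / ‖1 - (r * (Real.cos θ + Real.sin θ * I) : ℂ) * η‖ ^ 2) =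
      ENNReal.ofReal (2 * Real.pi) := by
  set a : ℂ := r * (starRingEnd ℂ) η with ha
  have hna : ‖a‖ = r := by simp [ha, hη, abs_of_nonneg hr0]
  set g : ℝ → ℝ := fun θ => (1 - r ^ 2) / ‖circleMap 0 1 θ - a‖ ^ 2 with hg
  have hne : ∀ θ, circleMap 0 1 θ - a ≠ 0 := by
    intro θ h
    have h1 : ‖circleMap 0 1 θ‖ = 1 := by simp
    rw [sub_eq_zero.1 h, hna] at h1
    linarith
  have hgc : Continuous g := by
    have : Continuous (circleMap 0 1) := continuous_circleMap 0 1
    refine continuous_const.div (by fun_prop) fun θ => ?_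
    exact pow_ne_zero _ (norm_ne_zero_iff.2 (hne θ))
  have hgp : ∀ θ, 0 ≤ g θ := fun θ => div_nonneg (by nlinarith) (by positivity)
  have key : ∀ θ : ℝ, ‖1 - (r * (Real.cos θ + Real.sin θ * I) : ℂ) * η‖
      = ‖circleMap 0 1 θ - a‖ := by
    intro θ
    have e : (Real.cos θ + Real.sin θ * I : ℂ) = circleMap 0 1 θ := by
      simp [circleMap, Complex.exp_mul_I]
    rw [e]
    have h1 : ‖circleMap 0 1 θ‖ = 1 := by simp
    have h2 : (starRingEnd ℂ) (circleMap 0 1 θ) * circleMap 0 1 θ = 1 := by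
      rw [Complex.conj_mul', h1]; simp
    have : 1 - (r * circleMap 0 1 θ : ℂ) * η
        = circleMap 0 1 θ * (starRingEnd ℂ) (circleMap 0 1 θ - a) := by
      simp only [ha, map_sub, map_mul, Complex.conj_conj, Complex.conj_ofReal]
      linear_combination -h2
    rw [this, norm_mul, h1, one_mul, RCLike.norm_conj]
  simp_rw [key]
  have hdc : DiffContOnCl ℂ (fun _ : ℂ => (1 : ℂ)) (ball 0 1) := diffContOnCl_const
  have hcirc := hdc.circleAverage_poissonKernel_smul' (w := a)
    (by rw [mem_ball_zero_iff, hna]; exact hr1)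
  -- `circleAverage` integrates over `[0, 2π]`, polar coordinates over `(-π, π)`.
  rw [Real.circleAverage_eq_integral_add (-Real.pi)] at hcirc
  have e2 : ∀ θ : ℝ, ((‖circleMap 0 1 (θ + -Real.pi) - 0‖ ^ 2 - ‖a - 0‖ ^ 2) /
      ‖circleMap 0 1 (θ + -Real.pi) - 0 - (a - 0)‖ ^ 2) • (1 : ℂ) = (g (θ + -Real.pi) : ℂ) := by
    intro θ
    simp [hg, hna]
  simp_rw [e2] at hcirc
  rw [intervalIntegral.integral_comp_add_right (fun θ => (g θ : ℂ)),
    intervalIntegral.integral_ofReal] at hcirc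
  have hint : ∫ θ in (-Real.pi)..Real.pi, g θ = 2 * Real.pi := by
    have e3 : (0 : ℝ) + -Real.pi = -Real.pi := by ring
    have e4 : 2 * Real.pi + -Real.pi = Real.pi := by ring
    rw [e3, e4, Complex.real_smul, ← Complex.ofReal_mul, Complex.ofReal_eq_one] at hcirc
    have := Real.pi_pos
    field_simp at hcirc
    linarith
  rw [intervalIntegral.integral_of_le (by linarith [Real.pi_pos]),
    integral_Ioc_eq_integral_Ioo] at hint
  rw [← hint, ofReal_integral_eq_lintegral_ofReal _ (ae_of_all _ hgp)]
  exact (hgc.integrableOn_Icc).mono_set Set.Ioo_subset_Icc_self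

lemma integral_radial (m : ℕ) :
    ∫ r in (0 : ℝ)..1, r * (1 - r ^ 2) ^ m = 1 / (2 * ((m : ℝ) + 1)) := by
  have h : ∀ x ∈ Set.uIcc (0 : ℝ) 1, HasDerivAt
      (fun r : ℝ => -(1 - r ^ 2) ^ (m + 1) / (2 * ((m : ℝ) + 1))) (x * (1 - x ^ 2) ^ m) x := by
    intro x _
    have h1 : HasDerivAt (fun r : ℝ => 1 - r ^ 2) (-(2 * x)) x := by
      simpa using ((hasDerivAt_id x).pow 2).const_sub 1
    refine ((h1.fun_pow (m + 1)).fun_neg.div_const (2 * ((m : ℝ) + 1))).congr_deriv ?_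
    have : (m : ℝ) + 1 ≠ 0 := by positivity
    push_cast [Nat.add_sub_cancel]
    field_simp
  rw [intervalIntegral.integral_eq_sub_of_hasDerivAt h
    (Continuous.intervalIntegrable (by fun_prop) _ _)]
  have : (m : ℝ) + 1 ≠ 0 := by positivity
  simp
  field_simp

lemma lintegral_poisson_disc {η : ℂ} (hη : ‖η‖ = 1) (m : ℕ) :
    ∫⁻ u in ball (0 : ℂ) 1, ENNReal.ofReal ((1 - ‖u‖ ^ 2) / ‖1 - u * η‖ ^ 2) *
      ENNReal.ofReal ((1 - ‖u‖ ^ 2) ^ m) = ENNReal.ofReal (Real.pi / ((m : ℝ) + 1)) := by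
  rw [← lintegral_indicator measurableSet_ball, ← Complex.lintegral_comp_polarCoord_symm,
    show polarCoord.target = Set.Ioi (0 : ℝ) ×ˢ Set.Ioo (-Real.pi) Real.pi from rfl,
    Measure.volume_eq_prod, ← Measure.prod_restrict, lintegral_prod]
  rotate_left
  · refine Measurable.aemeasurable ?_
    have h1 : Measurable fun p : ℝ × ℝ => Complex.polarCoord.symm p := by
      simp_rw [Complex.polarCoord_symm_apply]
      fun_prop
    have h2 : Measurable ((ball (0 : ℂ) 1).indicator fun u => ENNReal.ofReal
        ((1 - ‖u‖ ^ 2) / ‖1 - u * η‖ ^ 2) * ENNReal.ofReal ((1 - ‖u‖ ^ 2) ^ m)) :=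
      Measurable.indicator (by fun_prop) measurableSet_ball
    exact (ENNReal.measurable_ofReal.comp measurable_fst).smul (h2.comp h1)
  have hstep : ∀ r ∈ Set.Ioi (0 : ℝ),
      (∫⁻ θ in Set.Ioo (-Real.pi) Real.pi, ENNReal.ofReal (r, θ).1 •
        (ball (0 : ℂ) 1).indicator (fun u => ENNReal.ofReal ((1 - ‖u‖ ^ 2) / ‖1 - u * η‖ ^ 2) *
          ENNReal.ofReal ((1 - ‖u‖ ^ 2) ^ m)) (Complex.polarCoord.symm (r, θ))) =
      (Set.Iio (1 : ℝ)).indicator (fun r => ENNReal.ofReal (2 * Real.pi) *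
        ENNReal.ofReal (r * (1 - r ^ 2) ^ m)) r := by
    intro r hr
    have hr : 0 < r := hr
    have hn : ∀ θ, ‖Complex.polarCoord.symm (r, θ)‖ = r := fun θ => by
      rw [Complex.norm_polarCoord_symm, abs_of_pos hr]
    by_cases h1 : r < 1
    · have : ∀ θ, Complex.polarCoord.symm (r, θ) ∈ ball (0 : ℂ) 1 := fun θ => by
        rw [mem_ball_zero_iff, hn]; exact h1
      simp_rw [Set.indicator_of_mem (this _), hn]
      rw [Set.indicator_of_mem (show r ∈ Set.Iio 1 from h1),
        ← lintegral_poisson_circle hη hr.le h1, ENNReal.ofReal_mul hr.le,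
        ← lintegral_mul_const' _ _ (by finiteness)]
      refine lintegral_congr fun θ => ?_
      rw [Complex.polarCoord_symm_apply, smul_eq_mul]
      ring
    · have : ∀ θ, Complex.polarCoord.symm (r, θ) ∉ ball (0 : ℂ) 1 := fun θ => by
        rw [mem_ball_zero_iff, hn]; exact h1
      simp_rw [Set.indicator_of_notMem (this _)]
      rw [Set.indicator_of_notMem (show r ∉ Set.Iio 1 from h1)]
      simp
  rw [setLIntegral_congr_fun measurableSet_Ioi hstep, lintegral_indicator measurableSet_Iio,
    Measure.restrict_restrict measurableSet_Iio, Set.inter_comm, Set.Ioi_inter_Iio,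
    lintegral_const_mul _ (by fun_prop)]
  have hint := integral_radial m
  rw [intervalIntegral.integral_of_le zero_le_one, integral_Ioc_eq_integral_Ioo] at hint
  rw [← ofReal_integral_eq_lintegral_ofReal, hint, ← ENNReal.ofReal_mul (by positivity)]
  · congr 1
    have : (m : ℝ) + 1 ≠ 0 := by positivity
    field_simp
  · exact (Continuous.integrableOn_Icc (by fun_prop)).mono_set Set.Ioo_subset_Icc_self
  · refine (ae_restrict_iff' measurableSet_Ioo).2 (ae_of_all _ fun r hr => ?_)
    have : 0 ≤ 1 - r ^ 2 := by nlinarith [hr.1, hr.2]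
    exact mul_nonneg hr.1.le (pow_nonneg this m)

/-- The involutive automorphism `u ↦ (w - u) / (1 - u w̄)` of the unit disc exchanging `0`
and `w`, as a function on all of `ℂ`; it is only used for `u` in the disc. -/
noncomputable def discInvolution (w u : ℂ) : ℂ := (w - u) / (1 - u * (starRingEnd ℂ) w)

lemma one_sub_mul_conj_ne_zero {w u : ℂ} (hw : ‖w‖ < 1) (hu : ‖u‖ ≤ 1) :
    1 - u * (starRingEnd ℂ) w ≠ 0 := by
  intro h
  have h1 : ‖u * (starRingEnd ℂ) w‖ = 1 := by rw [← sub_eq_zero.1 h]; simp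
  rw [norm_mul, RCLike.norm_conj] at h1
  nlinarith [norm_nonneg u, norm_nonneg w]

lemma one_sub_norm_discInvolution_sq {w u : ℂ} (hw : ‖w‖ < 1) (hu : ‖u‖ ≤ 1) :
    1 - ‖discInvolution w u‖ ^ 2 =
      (1 - ‖w‖ ^ 2) * (1 - ‖u‖ ^ 2) / ‖1 - u * (starRingEnd ℂ) w‖ ^ 2 := by
  have h := one_sub_mul_conj_ne_zero hw hu
  have h' : ‖1 - u * (starRingEnd ℂ) w‖ ≠ 0 := norm_ne_zero_iff.2 h
  rw [discInvolution, norm_div, div_pow, eq_div_iff (by positivity)]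
  field_simp
  simp only [← Complex.normSq_eq_norm_sq, Complex.normSq_apply]
  simp
  ring

lemma one_sub_discInvolution_mul_conj {w u : ℂ} (hw : ‖w‖ < 1) (hu : ‖u‖ ≤ 1) :
    1 - discInvolution w u * (starRingEnd ℂ) w =
      ((1 - ‖w‖ ^ 2 : ℝ) : ℂ) / (1 - u * (starRingEnd ℂ) w) := by
  have h := one_sub_mul_conj_ne_zero hw hu
  have h2 := Complex.mul_conj' w
  rw [discInvolution]
  field_simp
  push_cast
  linear_combination -h2

lemma discInvolution_mem_ball {w u : ℂ} (hw : ‖w‖ < 1) (hu : ‖u‖ < 1) :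
    ‖discInvolution w u‖ < 1 := by
  have h := one_sub_norm_discInvolution_sq hw hu.le
  have h' : 0 < ‖1 - u * (starRingEnd ℂ) w‖ :=
    norm_pos_iff.2 (one_sub_mul_conj_ne_zero hw hu.le)
  have : 0 < 1 - ‖discInvolution w u‖ ^ 2 := by
    rw [h]
    have h1 : 0 < 1 - ‖w‖ ^ 2 := by nlinarith [norm_nonneg w]
    have h2 : 0 < 1 - ‖u‖ ^ 2 := by nlinarith [norm_nonneg u]
    positivity
  nlinarith [norm_nonneg (discInvolution w u)]

lemma discInvolution_discInvolution {w u : ℂ} (hw : ‖w‖ < 1) (hu : ‖u‖ < 1) :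
    discInvolution w (discInvolution w u) = u := by
  have h := one_sub_mul_conj_ne_zero hw hu.le
  have h2 := Complex.mul_conj' w
  have h3 : ((1 - ‖w‖ ^ 2 : ℝ) : ℂ) ≠ 0 := by
    rw [Complex.ofReal_ne_zero]; nlinarith [norm_nonneg w]
  rw [discInvolution, one_sub_discInvolution_mul_conj hw hu.le]
  rw [discInvolution]
  field_simp
  push_cast
  linear_combination (-u) * h2

lemma image_discInvolution_ball {w : ℂ} (hw : ‖w‖ < 1) :
    discInvolution w '' ball 0 1 = ball 0 1 := by
  ext z
  simp only [Set.mem_image, mem_ball_zero_iff]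
  constructor
  · rintro ⟨u, hu, rfl⟩
    exact discInvolution_mem_ball hw hu
  · intro hz
    exact ⟨_, discInvolution_mem_ball hw hz, discInvolution_discInvolution hw hz⟩

lemma hasDerivAt_discInvolution {w u : ℂ} (hw : ‖w‖ < 1) (hu : ‖u‖ < 1) :
    HasDerivAt (discInvolution w)
      (-((1 - ‖w‖ ^ 2 : ℝ) : ℂ) / (1 - u * (starRingEnd ℂ) w) ^ 2) u := by
  have h := one_sub_mul_conj_ne_zero hw hu.le
  have h2 := Complex.mul_conj' w
  have h3 : HasDerivAt (fun u => w - u) (-1) u := by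
    simpa using (hasDerivAt_id u).const_sub w
  have h4 : HasDerivAt (fun u => 1 - u * (starRingEnd ℂ) w) (-(starRingEnd ℂ) w) u := by
    simpa using ((hasDerivAt_id u).mul_const ((starRingEnd ℂ) w)).const_sub 1
  refine (h3.fun_div h4 h).congr_deriv ?_
  congr 1
  push_cast
  linear_combination h2

/-- Multiplication by `c` on `ℂ` has real Jacobian determinant `|c|²`. -/
lemma abs_det_restrictScalars (c : ℂ) :
    |((ContinuousLinearMap.toSpanSingleton ℂ c).restrictScalars ℝ).det| = ‖c‖ ^ 2 := by
  simp [ContinuousLinearMap.det, LinearMap.det_restrictScalars,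
      Algebra.norm_complex_eq, Complex.normSq_eq_norm_sq]

lemma norm_one_sub_mul_conj {ζ w : ℂ} (hζ : ‖ζ‖ = 1) :
    ‖1 - ζ * (starRingEnd ℂ) w‖ = ‖w - ζ‖ := by
  have h : (1 : ℂ) - ζ * (starRingEnd ℂ) w = ζ * (starRingEnd ℂ) (ζ - w) := by
    have := Complex.mul_conj' ζ
    rw [hζ] at this
    simp only [map_sub]
    push_cast at this
    linear_combination -this
  rw [h, norm_mul, hζ, one_mul, RCLike.norm_conj, norm_sub_rev]

/-- The case of a point mass at `ζ`, for `n = m + 1` and the unnormalized area measure. -/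
lemma lintegral_poisson_kernel_pow {ζ w : ℂ} (hζ : ‖ζ‖ = 1) (hw : ‖w‖ < 1) (m : ℕ) :
    ∫⁻ z in ball (0 : ℂ) 1, ENNReal.ofReal ((1 - ‖z‖ ^ 2) / ‖z - ζ‖ ^ 2) *
      ENNReal.ofReal ((1 - ‖z‖ ^ 2) ^ m / (‖1 - z * (starRingEnd ℂ) w‖ ^ 2) ^ (m + 2)) =
    ENNReal.ofReal (Real.pi / ((m : ℝ) + 1) / (1 - ‖w‖ ^ 2) ^ (m + 1)) *
      ENNReal.ofReal (1 / ‖1 - ζ * (starRingEnd ℂ) w‖ ^ 2) := by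
  have hwζ : w - ζ ≠ 0 := by
    intro h
    rw [sub_eq_zero.1 h] at hw
    linarith
  have hwζ' : ‖w - ζ‖ ≠ 0 := norm_ne_zero_iff.2 hwζ
  have hw2 : 0 < 1 - ‖w‖ ^ 2 := by nlinarith [norm_nonneg w]
  set η : ℂ := (1 - ζ * (starRingEnd ℂ) w) / (w - ζ) with hηdef
  have hη : ‖η‖ = 1 := by
    rw [hηdef, norm_div, norm_one_sub_mul_conj hζ, div_self hwζ']
  conv_lhs => rw [← image_discInvolution_ball hw]
  rw [lintegral_image_eq_lintegral_abs_det_fderiv_mul volume measurableSet_ball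
    (f' := fun u => (ContinuousLinearMap.toSpanSingleton ℂ
      (-((1 - ‖w‖ ^ 2 : ℝ) : ℂ) / (1 - u * (starRingEnd ℂ) w) ^ 2)).restrictScalars ℝ)]
  rotate_left
  · intro u hu
    exact ((hasDerivAt_discInvolution hw
      (mem_ball_zero_iff.1 hu)).hasFDerivAt.restrictScalars ℝ).hasFDerivWithinAt
  · intro u hu v hv huv
    rw [← discInvolution_discInvolution hw (mem_ball_zero_iff.1 hu), huv,
      discInvolution_discInvolution hw (mem_ball_zero_iff.1 hv)]
  have hstep : ∀ u ∈ ball (0 : ℂ) 1,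
      ENNReal.ofReal |((ContinuousLinearMap.toSpanSingleton ℂ
        (-((1 - ‖w‖ ^ 2 : ℝ) : ℂ) / (1 - u * (starRingEnd ℂ) w) ^ 2)).restrictScalars ℝ).det| *
      (ENNReal.ofReal ((1 - ‖discInvolution w u‖ ^ 2) / ‖discInvolution w u - ζ‖ ^ 2) *
        ENNReal.ofReal ((1 - ‖discInvolution w u‖ ^ 2) ^ m /
          (‖1 - discInvolution w u * (starRingEnd ℂ) w‖ ^ 2) ^ (m + 2))) =
      ENNReal.ofReal (1 / (‖w - ζ‖ ^ 2 * (1 - ‖w‖ ^ 2) ^ (m + 1))) *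
        (ENNReal.ofReal ((1 - ‖u‖ ^ 2) / ‖1 - u * η‖ ^ 2) *
          ENNReal.ofReal ((1 - ‖u‖ ^ 2) ^ m)) := by
    intro u hu
    rw [mem_ball_zero_iff] at hu
    have hu2 : 0 < 1 - ‖u‖ ^ 2 := by nlinarith [norm_nonneg u]
    have hd := one_sub_mul_conj_ne_zero hw hu.le
    have hN : 0 < ‖1 - u * (starRingEnd ℂ) w‖ := norm_pos_iff.2 hd
    have hη1 : 0 < ‖1 - u * η‖ := by
      rw [norm_pos_iff]
      intro h
      have h1 : ‖u * η‖ = 1 := by rw [← sub_eq_zero.1 h]; simp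
      rw [norm_mul, hη] at h1
      linarith
    have e1 : ‖discInvolution w u - ζ‖ = ‖w - ζ‖ * ‖1 - u * η‖ /
        ‖1 - u * (starRingEnd ℂ) w‖ := by
      rw [← norm_mul, ← norm_div]
      congr 1
      rw [discInvolution, hηdef]
      field_simp
      ring
    have hφ := discInvolution_mem_ball hw hu
    have hφ2 : 0 < 1 - ‖discInvolution w u‖ ^ 2 := by
      nlinarith [norm_nonneg (discInvolution w u)]
    rw [abs_det_restrictScalars, ← ENNReal.ofReal_mul (by positivity),
      ← ENNReal.ofReal_mul (by positivity), ← ENNReal.ofReal_mul (by positivity),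
      ← ENNReal.ofReal_mul (by positivity)]
    congr 1
    rw [e1, one_sub_norm_discInvolution_sq hw hu.le, one_sub_discInvolution_mul_conj hw hu.le,
      norm_div, norm_div, norm_neg, norm_pow, Complex.norm_real, Real.norm_eq_abs,
      abs_of_pos hw2]
    -- All that is left is an identity of rational functions in the following five quantities.
    generalize ‖1 - u * (starRingEnd ℂ) w‖ = N at *
    generalize ‖1 - u * η‖ = E at *
    generalize ‖w - ζ‖ = Z at *
    generalize 1 - ‖w‖ ^ 2 = A at *
    generalize 1 - ‖u‖ ^ 2 = B at *
    have := hw2.ne'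
    simp only [div_pow, mul_pow]
    field_simp
    ring
  rw [setLIntegral_congr_fun measurableSet_ball hstep, lintegral_const_mul' _ _ (by finiteness),
    lintegral_poisson_disc hη, norm_one_sub_mul_conj hζ, ← ENNReal.ofReal_mul (by positivity),
    ← ENNReal.ofReal_mul (by positivity)]
  congr 1
  field_simp

/-- No condition on `z` is needed: at the pole `1 - z w̄ = 0` both sides vanish by the
conventions for inverses and derivatives. -/
lemma norm_iteratedDeriv_cauchy_sq (n : ℕ) (w z : ℂ) :
    ‖iteratedDeriv n (fun z => (1 - z * (starRingEnd ℂ) w)⁻¹) z‖ ^ 2 =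
      (n.factorial : ℝ) ^ 2 * ‖w‖ ^ (2 * n) /
        (‖1 - z * (starRingEnd ℂ) w‖ ^ 2) ^ (n + 1) := by
  have h : (fun z => (1 - z * (starRingEnd ℂ) w)⁻¹) =
      fun z => (-(starRingEnd ℂ) w * z + 1)⁻¹ := by
    ext z
    congr 1
    ring
  have h2 : -(starRingEnd ℂ) w * z + 1 = 1 - z * (starRingEnd ℂ) w := by ring
  have h3 : (-1 - n : ℤ) = -((n + 1 : ℕ) : ℤ) := by push_cast; ring
  rw [h, iteratedDeriv_eq_iterate, iter_deriv_inv_linear]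
  simp only [h2, h3, zpow_neg, zpow_natCast]
  simp only [norm_mul, norm_pow, norm_neg, norm_one, one_pow, one_mul, norm_inv,
    RCLike.norm_conj, Complex.norm_natCast]
  ring

theorem stmt18 (n : ℕ) (hn : 1 ≤ n) (μ : Measure ℂ) [IsFiniteMeasure μ]
    (hμ : μ (sphere (0:ℂ) 1)ᶜ = 0)
    (w : ℂ) (hw : w ∈ ball (0:ℂ) 1) :
    Dmu n μ (fun z => (1 - z * (starRingEnd ℂ) w)⁻¹) =
      ENNReal.ofReal (‖w‖^(2*n) / (1 - ‖w‖^2)^n) * Vmu μ w := by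
  obtain ⟨m, rfl⟩ : ∃ m, n = m + 1 := ⟨n - 1, by omega⟩
  rw [mem_ball_zero_iff] at hw
  have hw2 : 0 < 1 - ‖w‖ ^ 2 := by nlinarith [norm_nonneg w]
  set C : ℝ := ((m + 1).factorial : ℝ) ^ 2 * ‖w‖ ^ (2 * (m + 1)) with hC
  have hstep : ∀ z ∈ ball (0 : ℂ) 1,
      (‖iteratedDeriv (m + 1) (fun z => (1 - z * (starRingEnd ℂ) w)⁻¹) z‖₊ : ℝ≥0∞) ^ 2 *
        Pmu μ z * ENNReal.ofReal ((1 - ‖z‖ ^ 2) ^ (m + 1 - 1)) =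
      ENNReal.ofReal C * ∫⁻ ζ, ENNReal.ofReal ((1 - ‖z‖ ^ 2) / ‖z - ζ‖ ^ 2) *
        ENNReal.ofReal ((1 - ‖z‖ ^ 2) ^ m /
          (‖1 - z * (starRingEnd ℂ) w‖ ^ 2) ^ (m + 2)) ∂μ := by
    intro z hz
    rw [mem_ball_zero_iff] at hz
    have hz2 : 0 < 1 - ‖z‖ ^ 2 := by nlinarith [norm_nonneg z]
    rw [lintegral_mul_const' _ _ (by finiteness), Pmu, ← enorm_eq_nnnorm, ← ofReal_norm,
      ← ENNReal.ofReal_pow (norm_nonneg _), norm_iteratedDeriv_cauchy_sq, Nat.add_sub_cancel,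
      mul_right_comm, ← ENNReal.ofReal_mul (by positivity), mul_left_comm,
      ← ENNReal.ofReal_mul (by positivity), mul_comm]
    congr 2
    ring
  rw [Dmu, nA, Measure.restrict_smul, lintegral_smul_measure,
    setLIntegral_congr_fun measurableSet_ball hstep, lintegral_const_mul' _ _ (by finiteness),
    lintegral_lintegral_swap]
  swap
  · exact Measurable.aemeasurable (by fun_prop)
  have hae : ∀ᵐ ζ ∂μ, ‖ζ‖ = 1 := by
    filter_upwards [mem_ae_iff.2 hμ] with ζ hζ
    simpa using hζ
  rw [lintegral_congr_ae (hae.mono fun ζ hζ => lintegral_poisson_kernel_pow hζ hw m),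
    lintegral_const_mul' _ _ (by finiteness), Vmu, smul_eq_mul,
    ← ENNReal.ofReal_inv_of_pos Real.pi_pos, ← mul_assoc, ← mul_assoc, ← mul_assoc,
    ← ENNReal.ofReal_mul (by positivity), ← ENNReal.ofReal_mul (by positivity),
    ← ENNReal.ofReal_mul (by positivity)]
  congr 2
  have : ((m.factorial : ℕ) : ℝ) ≠ 0 := by positivity
  have := Real.pi_ne_zero
  rw [hC, Nat.add_sub_cancel, Nat.factorial_succ]
  push_cast
  field_simp
end
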